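/- arXiv:2308.02956 — 5 statements merged into one kernel-verified Lean document; each statement's English description precedes it below -/
import Mathlib

section
/- Let K ⊂ ℝ³ be a convex body and let v ∈ S² be a unit vector such that for every unit vector w orthogonal to v, the shadow boundary Sb(K, w) of K in direction w is contained in a plane orthogonal to w. Then K has an axis of revolution parallel to v; that is, there exists a line ℓ with direction v such that every rotation of ℝ³ about ℓ maps K onto itself. -/
/-!
Call directions orthogonal to `v` horizontal. A point where `v` (or `-v`) attains its maximum on `K`
lies in every shadow boundary of horizontal direction, because the supporting plane there contains
every horizontal line through the point (`mem_shadowBoundary_of_support`). Hence a highest point `a`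
and a lowest point `c` lie in a common plane orthogonal to each horizontal `w`, so `c - a` is
parallel to `v`, and the plane belonging to `w` passes through `a`. The line through `a` with
direction `v` is the axis; its points at heights between those of `c` and `a` are in `K`.

Let `x` be a boundary point of `K` off the axis and `n` an outer normal of `K` at `x`. If `w` is
horizontal and orthogonal to `n`, then `x` is in the shadow boundary of direction `w`, so `x - a` is
orthogonal to `w`. Therefore the horizontal part of `n` is a nonzero multiple of the horizontal part
of `x - a`, and the multiple is positive since the axis point at the height of `x` is in `K`. In the
horizontal section through `x` this says that the supporting line at `x` is orthogonal to the radius.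

A planar section with this property is a disc about the axis point (`disc_of_radial_normals`): its
radial function satisfies `ρ θ' * cos (θ - θ') ≤ ρ θ`, hence `|ρ θ - ρ θ'| ≤ C (θ - θ')²` where `ρ`
is positive, so `ρ` is locally constant there (`const_of_quadratic`); the set of directions where
`ρ` attains its maximum is then open and closed. So membership in `K` depends only on the height and
the distance from the axis, which every isometry fixing the axis pointwise preserves.
-/

open Metric Set
open scoped RealInnerProductSpace

noncomputable section

abbrev E3 := EuclideanSpace ℝ (Fin 3)

/-- The line through `a` with direction `u`. -/
def lineThrough (a u : E3) : Set E3 := {x | ∃ t : ℝ, x = a + t • u}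

/-- The shadow boundary of `K` in direction `w`: boundary points of `K` through which
there is a line of direction `w` meeting `K` but not its interior. -/
def shadowBoundary (K : Set E3) (w : E3) : Set E3 :=
  {x ∈ frontier K | (lineThrough x w ∩ K).Nonempty ∧ lineThrough x w ∩ interior K = ∅}

/-! ### Planar sets with radial normals -/

/-- A function with a quadratic modulus of continuity has zero derivative, hence is constant on
connected open sets. -/
theorem const_of_quadratic {f : ℝ → ℝ} {s : Set ℝ} (hs : IsOpen s) (hc : IsPreconnected s) (C : ℝ)
    (h : ∀ x ∈ s, ∀ y ∈ s, |f x - f y| ≤ C * (x - y) ^ 2) {x y : ℝ} (hx : x ∈ s) (hy : y ∈ s) :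
    f x = f y := by
  have hd : ∀ z ∈ s, HasDerivAt f 0 z := by
    intro z hz
    have h1 : (fun x => f x - f z) =O[nhds z] fun x => ‖x - z‖ ^ 2 := by
      refine Asymptotics.IsBigO.of_bound C ?_
      filter_upwards [hs.mem_nhds hz] with x hx
      simpa using h x hx z hz
    have h2 := h1.hasFDerivAt (𝕜 := ℝ) (by norm_num)
    have h3 := (h2.hasDerivAt).add_const (f z)
    simpa using h3
  exact hs.is_const_of_deriv_eq_zero hc (fun z hz => (hd z hz).differentiableAt.differentiableWithinAt)
    (fun z hz => (hd z hz).deriv) hx hy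

/-- A compact planar set `A`, star-shaped about the origin, is a disc about the origin (possibly
just the origin) if at each of its nonzero points `z` outside the open subset `U` it lies in the
half-plane bounded by the line through `z` orthogonal to `z`. In the application `U` is the trace of
the interior of a three-dimensional body; the origin is not assumed to lie in `U`. -/
theorem disc_of_radial_normals {A U : Set ℂ} (hA : IsCompact A) (hU : IsOpen U) (hUA : U ⊆ A)
    (hstar : ∀ z ∈ A, ∀ s : ℝ, 0 ≤ s → s ≤ 1 → (s : ℂ) * z ∈ A)
    (H : ∀ z ∈ A, z ∉ U → z ≠ 0 → ∀ y ∈ A, z.re * y.re + z.im * y.im ≤ z.re ^ 2 + z.im ^ 2)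
    {z y : ℂ} (hz : z ∈ A) (hy : ‖y‖ ≤ ‖z‖) : y ∈ A := by
  obtain ⟨m, hmA, hm⟩ := hA.exists_isMaxOn ⟨z, hz⟩ continuous_norm.continuousOn
  have hm : ∀ x ∈ A, ‖x‖ ≤ ‖m‖ := fun x hx => hm hx
  set R := ‖m‖ with hR
  have hR0 : 0 ≤ R := norm_nonneg m
  rcases hR0.eq_or_lt with h0 | hRpos
  · have h1 := hm z hz
    have h2 : ‖y‖ = 0 := le_antisymm (by linarith) (norm_nonneg _)
    have h3 : ‖z‖ = 0 := le_antisymm (by linarith) (norm_nonneg _)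
    rw [norm_eq_zero] at h2 h3
    rwa [h2, ← h3]
  let P : ℝ → ℝ → ℂ := fun r θ => ⟨r * Real.cos θ, r * Real.sin θ⟩
  have hPexp : ∀ r θ, P r θ = r * Complex.exp (θ * Complex.I) := by
    intro r θ
    apply Complex.ext <;> simp [P, Complex.exp_ofReal_mul_I_re, Complex.exp_ofReal_mul_I_im]
  have hPc : Continuous (fun q : ℝ × ℝ => P q.1 q.2) := by
    simp only [hPexp]; fun_prop
  have hPn : ∀ r θ, ‖P r θ‖ = |r| := by
    intro r θ
    rw [hPexp, norm_mul, Complex.norm_exp_ofReal_mul_I]; simp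
  have hPm : ∀ (s r θ : ℝ), (s : ℂ) * P r θ = P (s * r) θ := by
    intro s r θ; rw [hPexp, hPexp]; push_cast; ring
  have hpolar : ∀ x : ℂ, P ‖x‖ x.arg = x := by
    intro x; rw [hPexp]; exact Complex.norm_mul_exp_arg_mul_I x
  have hle : ∀ r θ, P r θ ∈ A → r ≤ R := by
    intro r θ h
    have := hm _ h
    rw [hPn] at this
    exact (le_abs_self r).trans this
  -- `ρ θ`, chosen from this, is the radial function of `A`.
  have hmax : ∀ θ, P 0 θ ∈ A → ∃ r, 0 ≤ r ∧ P r θ ∈ A ∧ ∀ r', P r' θ ∈ A → r' ≤ r := by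
    intro θ h
    have hcl : IsClosed {r : ℝ | P r θ ∈ A} :=
      hA.isClosed.preimage (hPc.comp (by fun_prop : Continuous fun r : ℝ => (r, θ)))
    have hbd : BddAbove {r : ℝ | P r θ ∈ A} := ⟨R, fun r hr => hle r θ hr⟩
    exact ⟨sSup _, le_csSup hbd h, hcl.csSup_mem ⟨0, h⟩ hbd, fun r' hr' => le_csSup hbd hr'⟩
  have h0A : ∀ θ, P 0 θ ∈ A := by
    intro θ
    have := hstar z hz 0 le_rfl zero_le_one
    simpa [hPexp] using this
  choose ρ hρ0 hρA hρ using fun θ => hmax θ (h0A θ)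
  have hρU : ∀ θ, P (ρ θ) θ ∉ U := by
    intro θ hmem
    have hop : IsOpen {r : ℝ | P r θ ∈ U} :=
      hU.preimage (hPc.comp (by fun_prop : Continuous fun r : ℝ => (r, θ)))
    obtain ⟨ε, hε, hb⟩ := Metric.isOpen_iff.1 hop _ hmem
    have : ρ θ + ε / 2 ∈ {r : ℝ | P r θ ∈ U} := by
      apply hb
      rw [Metric.mem_ball, Real.dist_eq, add_sub_cancel_left, abs_of_pos (by positivity)]
      linarith
    have := hρ θ _ (hUA this)
    linarith
  have hkey : ∀ θ θ', 0 < ρ θ → ρ θ' * Real.cos (θ - θ') ≤ ρ θ := by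
    intro θ θ' hpos
    have h1 := H _ (hρA θ) (hρU θ) (by
      rw [← norm_pos_iff, hPn]; positivity) _ (hρA θ')
    simp only [P] at h1
    have h2 : ρ θ * (ρ θ' * Real.cos (θ - θ')) ≤ ρ θ * ρ θ := by
      rw [Real.cos_sub]
      nlinarith [Real.sin_sq_add_cos_sq θ]
    exact le_of_mul_le_mul_left h2 hpos
  have hquad : ∀ θ θ', 0 < ρ θ → ρ θ' - ρ θ ≤ R / 2 * (θ - θ') ^ 2 := by
    intro θ θ' hpos
    have h1 := hkey θ θ' hpos
    have h2 := Real.one_sub_sq_div_two_le_cos (x := θ - θ')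
    have h3 := hle _ _ (hρA θ')
    have h4 := mul_le_mul_of_nonneg_left h2 (hρ0 θ')
    nlinarith [mul_le_mul_of_nonneg_right h3 (sq_nonneg (θ - θ'))]
  have hS : {θ : ℝ | P R θ ∈ A} = Set.univ := by
    refine IsClopen.eq_univ ⟨?_, ?_⟩ ⟨m.arg, ?_⟩
    · exact hA.isClosed.preimage (hPc.comp (by fun_prop : Continuous fun θ : ℝ => (R, θ)))
    · rw [Metric.isOpen_iff]
      intro θ₀ hθ₀
      -- Were the midpoint of the radius ending at `P R θ₀` outside `U`, its half-plane would
      -- exclude `P R θ₀`. Hence `ρ` is positive near `θ₀`.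
      have hhalf : P (R / 2) θ₀ ∈ U := by
        by_contra hn
        have h1 : P (R / 2) θ₀ ∈ A := by
          have := hstar _ hθ₀ (1 / 2) (by norm_num) (by norm_num)
          rw [hPm] at this
          convert this using 2; ring
        have h2 := H _ h1 hn (by rw [← norm_pos_iff, hPn]; positivity) _ hθ₀
        simp only [P] at h2
        nlinarith [Real.sin_sq_add_cos_sq θ₀, mul_pos hRpos hRpos]
      have hop : IsOpen {θ : ℝ | P (R / 2) θ ∈ U} :=
        hU.preimage (hPc.comp (by fun_prop : Continuous fun θ : ℝ => (R / 2, θ)))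
      obtain ⟨ε, hε, hb⟩ := Metric.isOpen_iff.1 hop _ hhalf
      refine ⟨ε, hε, fun θ hθ => ?_⟩
      have hpos : ∀ x ∈ Metric.ball θ₀ ε, 0 < ρ x := by
        intro x hx
        have := hρ x _ (hUA (hb hx))
        linarith
      have hc := const_of_quadratic (f := ρ) Metric.isOpen_ball
        (convex_ball θ₀ ε).isPreconnected (R / 2) (fun x hx y hy => by
          rw [abs_le]
          have h1 := hquad x y (hpos x hx)
          have h2 := hquad y x (hpos y hy)
          have h3 : (y - x) ^ 2 = (x - y) ^ 2 := by ring
          rw [h3] at h2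
          exact ⟨by linarith, by linarith⟩) hθ (Metric.mem_ball_self hε)
      have hR' : ρ θ₀ = R := le_antisymm (hle _ _ (hρA θ₀)) (hρ θ₀ _ hθ₀)
      have := hρA θ
      rw [hc, hR'] at this
      exact this
    · show P R m.arg ∈ A
      rw [hR, hpolar]; exact hmA
  have hyR : P R y.arg ∈ A := hS.ge (Set.mem_univ y.arg)
  have := hstar _ hyR (‖y‖ / R) (by positivity) (by
    rw [div_le_one hRpos]; exact hy.trans (hm z hz))
  rw [hPm, div_mul_cancel₀ _ hRpos.ne', hpolar] at this
  exact this

/-! ### Supporting planes and shadow boundaries -/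

theorem inner_lt_of_mem_interior {K : Set E3} {x n y : E3} (hn : n ≠ 0)
    (hs : ∀ y ∈ K, ⟪n, y⟫ ≤ ⟪n, x⟫) (hy : y ∈ interior K) : ⟪n, y⟫ < ⟪n, x⟫ := by
  have hop : IsOpen {t : ℝ | y + t • n ∈ interior K} :=
    isOpen_interior.preimage (by fun_prop)
  obtain ⟨ε, hε, hb⟩ := Metric.isOpen_iff.1 hop 0 (by simpa using hy)
  have hmem : y + (ε / 2) • n ∈ interior K := by
    apply hb
    rw [Metric.mem_ball, Real.dist_eq, sub_zero, abs_of_pos (by positivity)]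
    linarith
  have h1 := hs _ (interior_subset hmem)
  rw [inner_add_right, inner_smul_right] at h1
  have h2 : 0 < ⟪n, n⟫ := real_inner_self_pos.2 hn
  nlinarith [mul_pos hε h2]

theorem mem_shadowBoundary_of_support {K : Set E3} {x n w : E3} (hx : x ∈ K) (hn : n ≠ 0)
    (hs : ∀ y ∈ K, ⟪n, y⟫ ≤ ⟪n, x⟫) (hw : ⟪n, w⟫ = 0) : x ∈ shadowBoundary K w := by
  refine ⟨⟨subset_closure hx, fun h => lt_irrefl _ (inner_lt_of_mem_interior hn hs h)⟩,
    ⟨x, ⟨0, by simp⟩, hx⟩, ?_⟩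
  rw [Set.eq_empty_iff_forall_notMem]
  rintro _ ⟨⟨t, rfl⟩, h⟩
  have := inner_lt_of_mem_interior hn hs h
  rw [inner_add_right, inner_smul_right, hw] at this
  simp at this

theorem exists_support {K : Set E3} (hKconv : Convex ℝ K) (hKint : (interior K).Nonempty)
    {x : E3} (hx : x ∉ interior K) : ∃ n : E3, n ≠ 0 ∧ ∀ y ∈ K, ⟪n, y⟫ ≤ ⟪n, x⟫ := by
  obtain ⟨g, hg⟩ := geometric_hahn_banach_open_point hKconv.interior isOpen_interior hx
  refine ⟨(InnerProductSpace.toDual ℝ E3).symm g, ?_, ?_⟩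
  · intro h0
    obtain ⟨y, hy⟩ := hKint
    have := hg y hy
    simp only [← InnerProductSpace.toDual_symm_apply (𝕜 := ℝ) (y := g), h0, inner_zero_left] at this
    exact lt_irrefl _ this
  · intro y hy
    simp only [InnerProductSpace.toDual_symm_apply]
    have hcl : y ∈ closure (interior K) := by
      rw [hKconv.closure_interior_eq_closure_of_nonempty_interior hKint]
      exact subset_closure hy
    exact closure_minimal (s := interior K) (t := {y | g y ≤ g x}) (fun z hz => (hg z hz).le)
      (isClosed_le g.continuous continuous_const) hcl

/-- An orthonormal basis `e₁, e₂` of the plane orthogonal to the unit vector `v`. -/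
theorem exists_frame {v : E3} (hv : ‖v‖ = 1) : ∃ e₁ e₂ : E3,
    ⟪e₁, e₁⟫ = 1 ∧ ⟪e₂, e₂⟫ = 1 ∧ ⟪e₁, e₂⟫ = 0 ∧ ⟪e₁, v⟫ = 0 ∧ ⟪e₂, v⟫ = 0 ∧
    ∀ x : E3, x = ⟪v, x⟫ • v + ⟪e₁, x⟫ • e₁ + ⟪e₂, x⟫ • e₂ := by
  obtain ⟨b, hb⟩ := Orthonormal.exists_orthonormalBasis_extension_of_card_eq (𝕜 := ℝ) (E := E3)
    (ι := Fin 3) (by simp) (v := fun _ => v) (s := {2}) (by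
      refine ⟨fun i => hv, fun i j hij => absurd (Subsingleton.elim i j) hij⟩)
  have hb2 : b 2 = v := hb 2 rfl
  have ho := b.orthonormal
  refine ⟨b 0, b 1, ?_, ?_, ?_, ?_, ?_, ?_⟩
  · simp
  · simp
  · exact ho.2 (by decide)
  · rw [← hb2]; exact ho.2 (by decide)
  · rw [← hb2]; exact ho.2 (by decide)
  · intro x
    conv_lhs => rw [← b.sum_repr' x, Fin.sum_univ_three]
    rw [hb2]; abel

/-! ### Bodies with planar shadow boundaries -/

/-- If every shadow boundary of `K` in a unit direction `w` orthogonal to `v` lies in a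
plane orthogonal to `w`, then `K` has an axis of revolution parallel to `v`: there is a
point `p` such that every orientation-preserving isometry of `ℝ³` fixing the line
through `p` with direction `v` pointwise maps `K` onto itself. -/
theorem stmt_9 (K : Set E3)
    (hKcpt : IsCompact K) (hKconv : Convex ℝ K) (hKint : (interior K).Nonempty)
    (v : E3) (hv : ‖v‖ = 1)
    (hsb : ∀ w : E3, ‖w‖ = 1 → ⟪w, v⟫ = 0 →
      ∃ d : ℝ, shadowBoundary K w ⊆ {x | ⟪w, x⟫ = d}) :
    ∃ p : E3, ∀ f : E3 ≃ᵃⁱ[ℝ] E3,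
      (∀ t : ℝ, f (p + t • v) = p + t • v) →
      0 < LinearMap.det (f.linearIsometryEquiv : E3 →ₗ[ℝ] E3) →
      f '' K = K := by
  obtain ⟨e₁, e₂, h11, h22, h12, h1v, h2v, hexp⟩ := exists_frame hv
  have hv0 : v ≠ 0 := by rintro rfl; simp at hv
  have h21 : ⟪e₂, e₁⟫ = 0 := by rw [real_inner_comm]; exact h12
  have hv1 : ⟪v, e₁⟫ = 0 := by rw [real_inner_comm]; exact h1v
  have hv2 : ⟪v, e₂⟫ = 0 := by rw [real_inner_comm]; exact h2v
  have hne : K.Nonempty := hKint.mono interior_subset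
  have hcv : Continuous fun x : E3 => ⟪v, x⟫ := by fun_prop
  obtain ⟨a, haK, ha⟩ := hKcpt.exists_isMaxOn hne hcv.continuousOn
  obtain ⟨c, hcK, hc⟩ := hKcpt.exists_isMinOn hne hcv.continuousOn
  have ha : ∀ y ∈ K, ⟪v, y⟫ ≤ ⟪v, a⟫ := fun y hy => ha hy
  have hc : ∀ y ∈ K, ⟪v, c⟫ ≤ ⟪v, y⟫ := fun y hy => hc hy
  -- Every shadow boundary of horizontal direction lies in a plane through the top point `a`.
  have hperp : ∀ w x n : E3, ⟪w, v⟫ = 0 → x ∈ K → n ≠ 0 → (∀ y ∈ K, ⟪n, y⟫ ≤ ⟪n, x⟫) →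
      ⟪n, w⟫ = 0 → ⟪w, x - a⟫ = 0 := by
    intro w x n hwv hx hn hs hnw
    rcases eq_or_ne w 0 with rfl | hw
    · simp
    have hw' : ‖w‖ ≠ 0 := norm_ne_zero_iff.2 hw
    obtain ⟨d, hd⟩ := hsb (‖w‖⁻¹ • w) (by rw [norm_smul]; simp [hw'])
      (by rw [real_inner_smul_left, hwv, mul_zero])
    have h1 : ⟪‖w‖⁻¹ • w, x⟫ = d := hd (mem_shadowBoundary_of_support hx hn hs
      (by rw [inner_smul_right, hnw, mul_zero]))
    have h2 : ⟪‖w‖⁻¹ • w, a⟫ = d := hd (mem_shadowBoundary_of_support haK hv0 ha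
      (by rw [inner_smul_right, real_inner_comm, hwv, mul_zero]))
    have h3 : ‖w‖⁻¹ * ⟪w, x - a⟫ = 0 := by
      rw [← real_inner_smul_left, inner_sub_right, h1, h2, sub_self]
    exact (mul_eq_zero.1 h3).resolve_left (inv_ne_zero hw')
  have hcs : ∀ y ∈ K, ⟪-v, y⟫ ≤ ⟪-v, c⟫ := fun y hy => by
    rw [inner_neg_left, inner_neg_left]; linarith [hc y hy]
  have hca : c = a + ⟪v, c - a⟫ • v := by
    have h1 := hperp e₁ c (-v) h1v hcK (neg_ne_zero.2 hv0) hcs (by rw [inner_neg_left, hv1, neg_zero])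
    have h2 := hperp e₂ c (-v) h2v hcK (neg_ne_zero.2 hv0) hcs (by rw [inner_neg_left, hv2, neg_zero])
    have h3 := hexp (c - a)
    rw [h1, h2, zero_smul, zero_smul, add_zero, add_zero] at h3
    rw [← h3]; abel
  have haxis : ∀ x ∈ K, a + ⟪v, x - a⟫ • v ∈ K := by
    intro x hx
    set t := ⟪v, x - a⟫ with ht
    set τ := ⟪v, c - a⟫ with hτ
    have ht0 : t ≤ 0 := by rw [ht, inner_sub_right]; linarith [ha x hx]
    have htτ : τ ≤ t := by rw [ht, hτ, inner_sub_right, inner_sub_right]; linarith [hc x hx]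
    rcases (htτ.trans ht0).eq_or_lt with h0 | hneg
    · have : t = 0 := by linarith
      rw [this, zero_smul, add_zero]; exact haK
    · have hs0 : 0 ≤ t / τ := div_nonneg_of_nonpos ht0 hneg.le
      have hs1 : t / τ ≤ 1 := by rw [div_le_one_of_neg hneg]; exact htτ
      have := hKconv haK hcK (sub_nonneg.2 hs1) hs0 (by ring)
      convert this using 1
      rw [hca]
      have h4 : t = t / τ * τ := (div_mul_cancel₀ t hneg.ne).symm
      nth_rewrite 1 [h4]
      module
  -- Membership in `K` depends only on the height and the distance from the axis. `Q` parametrizes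
  -- the horizontal plane through `x` by `ℂ`, with origin on the axis; `π` inverts `Q`.
  have hclaim : ∀ x ∈ K, ∀ y, ⟪v, y - a⟫ = ⟪v, x - a⟫ → ‖y - a‖ = ‖x - a‖ → y ∈ K := by
    intro x hx y hyv hyn
    set t := ⟪v, x - a⟫ with ht
    have hq : a + t • v ∈ K := haxis x hx
    let Q : ℂ → E3 := fun z => a + t • v + z.re • e₁ + z.im • e₂
    have hQc : Continuous Q := by
      have h1 := Complex.continuous_re
      have h2 := Complex.continuous_im
      fun_prop
    have hQ1 : ∀ z, ⟪e₁, Q z - a⟫ = z.re := by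
      intro z
      have : Q z - a = t • v + z.re • e₁ + z.im • e₂ := by simp only [Q]; abel
      rw [this]; simp only [inner_add_right, inner_smul_right, h1v, h11, h12]; ring
    have hQ2 : ∀ z, ⟪e₂, Q z - a⟫ = z.im := by
      intro z
      have : Q z - a = t • v + z.re • e₁ + z.im • e₂ := by simp only [Q]; abel
      rw [this]; simp only [inner_add_right, inner_smul_right, h2v, h21, h22]; ring
    let π : E3 → ℂ := fun u => ⟪e₁, u - a⟫ + ⟪e₂, u - a⟫ * Complex.I
    have hπre : ∀ u, (π u).re = ⟪e₁, u - a⟫ := fun u => by simp [π]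
    have hπim : ∀ u, (π u).im = ⟪e₂, u - a⟫ := fun u => by simp [π]
    have hπQ : ∀ z, π (Q z) = z := fun z =>
      Complex.ext (by rw [hπre, hQ1]) (by rw [hπim, hQ2])
    have hQπ : ∀ u, ⟪v, u - a⟫ = t → Q (π u) = u := by
      intro u hu
      have h3 := hexp (u - a)
      simp only [Q, hπre, hπim]
      rw [hu] at h3
      have h4 : u = a + (u - a) := by abel
      conv_rhs => rw [h4, h3]
      abel
    have hnorm : ∀ u, ⟪v, u - a⟫ = t → ‖π u‖ ^ 2 = ‖u - a‖ ^ 2 - t ^ 2 := by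
      intro u hu
      have h3 : ⟪u - a, u - a⟫ = ⟪u - a, ⟪v, u - a⟫ • v + ⟪e₁, u - a⟫ • e₁ + ⟪e₂, u - a⟫ • e₂⟫ := by
        rw [← hexp (u - a)]
      rw [inner_add_right, inner_add_right, inner_smul_right, inner_smul_right, inner_smul_right,
        real_inner_comm v, real_inner_comm e₁, real_inner_comm e₂, real_inner_self_eq_norm_sq, hu] at h3
      rw [Complex.sq_norm, Complex.normSq_apply, hπre, hπim, h3]
      ring
    have hmem : π y ∈ Q ⁻¹' K := by
      refine disc_of_radial_normals (A := Q ⁻¹' K) (U := Q ⁻¹' interior K) ?_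
        (isOpen_interior.preimage hQc) (Set.preimage_mono interior_subset) ?_ ?_
        (z := π x) ?_ ?_
      · have hπc : Continuous π := by fun_prop
        refine (hKcpt.image hπc).of_isClosed_subset (hKcpt.isClosed.preimage hQc) ?_
        exact fun z hz => ⟨Q z, hz, hπQ z⟩
      · intro z hz s hs0 hs1
        have := hKconv hq hz (sub_nonneg.2 hs1) hs0 (by ring)
        show Q _ ∈ K
        convert this using 1
        simp only [Q, Complex.re_ofReal_mul, Complex.im_ofReal_mul]
        module
      · intro z hz hzU hz0 u hu
        obtain ⟨n, hn, hs⟩ := exists_support hKconv hKint hzU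
        have hhor : ∀ p q : ℝ, p * ⟪n, e₁⟫ + q * ⟪n, e₂⟫ = 0 → p * z.re + q * z.im = 0 := by
          intro p q hpq
          have := hperp (p • e₁ + q • e₂) (Q z) n
            (by simp only [inner_add_left, real_inner_smul_left, h1v, h2v]; ring) hz hn hs
            (by simp only [inner_add_right, inner_smul_right]; linarith)
          simpa only [inner_add_left, real_inner_smul_left, hQ1, hQ2] using this
        have hA := hs _ hq
        have hB := hs _ hu
        simp only [Q, inner_add_right, inner_smul_right] at hA hB
        have hpar := hhor (-⟪n, e₂⟫) ⟪n, e₁⟫ (by ring)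
        have hzpos : 0 < z.re ^ 2 + z.im ^ 2 := by
          have := Complex.normSq_pos.2 hz0
          rw [Complex.normSq_apply] at this
          linarith
        have hvert := hhor z.re z.im
        generalize ⟪n, e₁⟫ = n₁ at *
        generalize ⟪n, e₂⟫ = n₂ at *
        have hpos : 0 < z.re * n₁ + z.im * n₂ := by
          refine lt_of_le_of_ne (by linarith) fun h => ?_
          have := hvert h.symm
          nlinarith
        -- The horizontal part of `n` is a positive multiple of `z`, the factor being `⟨z, n⟩ / |z|²`.
        have hm : (z.re * n₁ + z.im * n₂) * (z.re * u.re + z.im * u.im) ≤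
            (z.re * n₁ + z.im * n₂) * (z.re ^ 2 + z.im ^ 2) := by
          have e1 : n₁ * (z.re ^ 2 + z.im ^ 2) = (z.re * n₁ + z.im * n₂) * z.re := by
            linear_combination z.im * hpar
          have e2 : n₂ * (z.re ^ 2 + z.im ^ 2) = (z.re * n₁ + z.im * n₂) * z.im := by
            linear_combination -z.re * hpar
          have h5 : (z.re ^ 2 + z.im ^ 2) * (u.re * n₁ + u.im * n₂) ≤
            (z.re ^ 2 + z.im ^ 2) * (z.re * n₁ + z.im * n₂) :=
            mul_le_mul_of_nonneg_left (by linarith) hzpos.le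
          linear_combination h5 - u.re * e1 - u.im * e2
        exact le_of_mul_le_mul_left hm hpos
      · show Q (π x) ∈ K
        rw [hQπ x rfl]; exact hx
      · refine le_of_sq_le_sq ?_ (norm_nonneg _)
        rw [hnorm y hyv, hnorm x rfl, hyn]
    have : Q (π y) ∈ K := hmem
    rwa [hQπ y hyv] at this
  refine ⟨a, fun f hf _ => ?_⟩
  have hfa : f a = a := by simpa using hf 0
  have hfL : ∀ x, f x - a = f.linearIsometryEquiv (x - a) := by
    intro x
    have := f.map_vsub x a
    simp only [vsub_eq_sub, hfa] at this
    exact this.symm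
  have hLv : f.linearIsometryEquiv v = v := by
    have h1 := hfL (a + (1 : ℝ) • v)
    rw [hf 1] at h1
    simpa using h1.symm
  have hfv : ∀ x, ⟪v, f x - a⟫ = ⟪v, x - a⟫ := by
    intro x
    rw [hfL]
    nth_rewrite 1 [← hLv]
    exact f.linearIsometryEquiv.inner_map_map _ _
  have hfn : ∀ x, ‖f x - a‖ = ‖x - a‖ := by
    intro x; rw [hfL]; exact f.linearIsometryEquiv.norm_map _
  apply Set.Subset.antisymm
  · rintro _ ⟨x, hx, rfl⟩
    exact hclaim x hx _ (hfv x) (hfn x)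
  · intro x hx
    refine ⟨f.symm x, hclaim x hx _ ?_ ?_, f.apply_symm_apply x⟩
    · rw [← hfv (f.symm x), f.apply_symm_apply]
    · rw [← hfn (f.symm x), f.apply_symm_apply]
end
end

section
/- Let K and L be convex bodies in ℝ³ with L contained in the interior of K and L strictly convex. Suppose that for every unit vector u ∈ S², every chord of the orthogonal projection π_u(K) whose line supports π_u(L) has length 1. Then K and L are concentric Euclidean balls. -/
/-!
A chord of `π_u(K)` on a line supporting `π_u(L)` is the projection along `u` of the section of `K`
by a plane supporting `L`. The chord condition therefore says that the section of `K` by each plane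
supporting `L` has constant width `1` (`constWidthSections_of_chord`).

For a unit vector `d`, the convex set `K ∩ (K - d)` reaches every supporting plane of `L` parallel to
`d`, so a separation argument gives `L ⊆ (K ∩ (K - d)) + ℝ d`: every line tangent to `L` contains a
chord of `K` of length `1` (`exists_unit_chord_through`). Within the section at a support point `x`,
all diameters thus pass through `x`. A diameter of a body of constant width is a double normal, which
forces the radial function from `x` to be constant; the section is the disc of radius `1/2` centred
at `x` (`section_disc`). In particular `x` is determined by the normal `n` of the plane, and it
depends continuously on `n` (`exists_uniform`).

For two nearby normals `n₁`, `n₂` the two discs meet in a chord on the common line of their planes.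
They are congruent and centred at the support points `x₁`, `x₂`, so by symmetry `x₁ - x₂` is a
multiple of `n₁ - n₂` (`sub_eq_smul_of_close`). Three distinct points of a sphere are not collinear,
so the factor is locally constant, and connectedness of the sphere gives `x = c + s n` for all
`n` (`exists_center`). Hence `L` is the ball of centre `c` and radius `s`, and `K`, whose sections by
the planes tangent to `L` are discs of radius `1/2`, is the ball of centre `c` and
radius `√(s² + 1/4)`.
-/

open Metric Set
open scoped RealInnerProductSpace

noncomputable section

/-- The plane `{x | ⟪w, x⟫ = d}` with normal vector `w`. -/
def planeEq (w : E3) (d : ℝ) : Set E3 := {x | ⟪w, x⟫ = d}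

/-- The plane `{x | ⟪w, x⟫ = d}` supports `L`: it meets `L` and `L` lies in one of
the closed half-spaces it bounds. -/
def PlaneSupports (L : Set E3) (w : E3) (d : ℝ) : Prop :=
  (planeEq w d ∩ L).Nonempty ∧ ∀ y ∈ L, ⟪w, y⟫ ≤ d

/-- The width of a set `S` in direction `w'`. -/
def widthIn (S : Set E3) (w' : E3) : ℝ :=
  sSup ((fun x => ⟪x, w'⟫) '' S) - sInf ((fun x => ⟪x, w'⟫) '' S)

/-- A subset of the plane with normal `w` has constant width `h` if its width equals
`h` in every unit direction parallel to the plane. -/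
def HasConstWidthIn (S : Set E3) (w : E3) (h : ℝ) : Prop :=
  ∀ w' : E3, ‖w'‖ = 1 → ⟪w', w⟫ = 0 → widthIn S w' = h

/-- Orthogonal projection of `ℝ³` onto the plane `u^⊥` through the origin. -/
def proj (u x : E3) : E3 := x - ⟪x, u⟫ • u

/-! ### Support points and orthogonal frames -/

/-- `x` is a point of `L` at which the plane with outer normal `w` supports `L`. -/
def IsSupp (L : Set E3) (w x : E3) : Prop := x ∈ L ∧ ∀ y ∈ L, ⟪w, y⟫ ≤ ⟪w, x⟫

lemma exists_isSupp {L : Set E3} (hL : IsCompact L) (hne : L.Nonempty) (w : E3) :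
    ∃ x, IsSupp L w x := by
  obtain ⟨x, hx, hmax⟩ := hL.exists_isMaxOn hne
    (f := fun y => ⟪w, y⟫) (by fun_prop)
  exact ⟨x, hx, fun y hy => hmax hy⟩

lemma exists_unit_perp (a b : E3) : ∃ e : E3, ‖e‖ = 1 ∧ ⟪a, e⟫ = 0 ∧ ⟪b, e⟫ = 0 := by
  let f : E3 →ₗ[ℝ] ℝ × ℝ := (innerₛₗ ℝ a).prod (innerₛₗ ℝ b)
  have hker : LinearMap.ker f ≠ ⊥ := by
    apply LinearMap.ker_ne_bot_of_finrank_lt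
    simp
  obtain ⟨v, hv, hv0⟩ := (Submodule.ne_bot_iff _).1 hker
  have hf : f v = 0 := hv
  have h1 : ⟪a, v⟫ = 0 := congrArg Prod.fst hf
  have h2 : ⟪b, v⟫ = 0 := congrArg Prod.snd hf
  refine ⟨‖v‖⁻¹ • v, ?_, ?_, ?_⟩
  · rw [norm_smul, norm_inv, norm_norm, inv_mul_cancel₀ (norm_ne_zero_iff.2 hv0)]
  · rw [inner_smul_right, h1, mul_zero]
  · rw [inner_smul_right, h2, mul_zero]

lemma orthonormal_expand {a b c : E3} (ha : ‖a‖ = 1) (hb : ‖b‖ = 1) (hc : ‖c‖ = 1)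
    (hab : ⟪a, b⟫ = 0) (hac : ⟪a, c⟫ = 0) (hbc : ⟪b, c⟫ = 0) (v : E3) :
    v = ⟪a, v⟫ • a + ⟪b, v⟫ • b + ⟪c, v⟫ • c := by
  have hon : Orthonormal ℝ ![a, b, c] := by
    constructor
    · intro i; fin_cases i <;> simpa
    · intro i j hij
      fin_cases i <;> fin_cases j <;> simp_all [real_inner_comm]
  have hspan : ⊤ ≤ Submodule.span ℝ (Set.range ![a, b, c]) := by
    rw [hon.linearIndependent.span_eq_top_of_card_eq_finrank (by simp)]
  have := (OrthonormalBasis.mk hon hspan).sum_repr' v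
  simp [Fin.sum_univ_three] at this
  exact this.symm

lemma eq_zero_of_perp {a b c : E3} (ha : ‖a‖ = 1) (hb : ‖b‖ = 1) (hc : ‖c‖ = 1)
    (hab : ⟪a, b⟫ = 0) (hac : ⟪a, c⟫ = 0) (hbc : ⟪b, c⟫ = 0) {v : E3}
    (h1 : ⟪a, v⟫ = 0) (h2 : ⟪b, v⟫ = 0) (h3 : ⟪c, v⟫ = 0) : v = 0 := by
  rw [orthonormal_expand ha hb hc hab hac hbc v, h1, h2, h3]
  simp

lemma eq_of_inner_eq_one {u v : E3} (h : ‖v‖ ≤ 1) (hu : ‖u‖ = 1) (huv : ⟪u, v⟫ = 1) :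
    v = u := by
  have h1 : ‖v - u‖ ^ 2 = ‖v‖ ^ 2 - 2 * ⟪v, u⟫ + ‖u‖ ^ 2 := norm_sub_sq_real v u
  rw [real_inner_comm, huv, hu] at h1
  have h2 : ‖v - u‖ ^ 2 ≤ 0 := by nlinarith [norm_nonneg v]
  have h3 : ‖v - u‖ = 0 := by nlinarith [norm_nonneg (v - u)]
  exact sub_eq_zero.1 (norm_eq_zero.1 h3)

lemma exists_inner_ne {L : Set E3} (hLint : (interior L).Nonempty) {w : E3} (hw : ‖w‖ = 1)
    {x : E3} : ∃ y ∈ L, ⟪w, y⟫ ≠ ⟪w, x⟫ := by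
  obtain ⟨y, hy⟩ := hLint
  obtain ⟨ε, hε, hball⟩ := Metric.mem_nhds_iff.1 (mem_interior_iff_mem_nhds.1 hy)
  by_cases h : ⟪w, y⟫ = ⟪w, x⟫
  · refine ⟨y + (ε / 2) • w, hball ?_, ?_⟩
    · rw [Metric.mem_ball, dist_eq_norm]
      simp [norm_smul, hw, abs_of_pos hε]
      linarith
    · rw [inner_add_right, inner_smul_right, real_inner_self_eq_norm_sq, hw, h]
      intro h'
      linarith
  · exact ⟨y, interior_subset hy, h⟩

lemma IsSupp.exists_lt {L : Set E3} (hLint : (interior L).Nonempty) {w x : E3} (hw : ‖w‖ = 1)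
    (hx : IsSupp L w x) : ∃ y ∈ L, ⟪w, y⟫ < ⟪w, x⟫ := by
  obtain ⟨y, hy, hne⟩ := exists_inner_ne hLint hw (x := x)
  exact ⟨y, hy, lt_of_le_of_ne (hx.2 y hy) hne⟩

/-! ### Sections of constant width -/

/-- A linear functional that is nonconstant on `S` has no maximum at a relative interior point. -/
lemma not_mem_intrinsicInterior {S : Set E3} {w z y : E3} (hS : ∀ p ∈ S, ⟪w, p⟫ ≤ ⟪w, z⟫)
    (hy : y ∈ S) (hyz : ⟪w, y⟫ < ⟪w, z⟫) : z ∉ intrinsicInterior ℝ S := by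
  rintro ⟨z', hz', rfl⟩
  have hyA : y ∈ affineSpan ℝ S := subset_affineSpan ℝ S hy
  let γ : ℝ → affineSpan ℝ S := fun t =>
    ⟨AffineMap.lineMap (z' : E3) y t, AffineMap.lineMap_mem t z'.2 hyA⟩
  have hγ : Continuous γ := by
    apply Continuous.subtype_mk
    exact AffineMap.lineMap_continuous
  have h0 : γ 0 = z' := by
    apply Subtype.ext
    simp [γ]
  have hn : ∀ᶠ t in nhds (0 : ℝ), γ t ∈ interior ((↑) ⁻¹' S : Set (affineSpan ℝ S)) := by
    apply hγ.continuousAt.eventually_mem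
    rw [h0]
    exact isOpen_interior.mem_nhds hz'
  obtain ⟨ε, hε, hb⟩ := Metric.eventually_nhds_iff.1 hn
  have h1 := hb (y := -(ε / 2)) (by simp [abs_of_pos hε]; linarith)
  have h2 : AffineMap.lineMap (z' : E3) y (-(ε / 2)) ∈ S :=
    interior_subset (s := ((↑) ⁻¹' S : Set (affineSpan ℝ S))) h1
  have h3 := hS _ h2
  rw [AffineMap.lineMap_apply_module', inner_add_right, inner_smul_right, inner_sub_right] at h3
  nlinarith

/-- The chord condition says that every section of `K` by a plane supporting `L` has
width `1` in each direction parallel to the plane. -/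
lemma section_width {K L : Set E3} (hKcpt : IsCompact K)
    (hLint : (interior L).Nonempty) (hLK : L ⊆ K)
    (hchord : ∀ u : E3, ‖u‖ = 1 → ∀ a d : E3, ⟪a, u⟫ = 0 → ⟪d, u⟫ = 0 → ‖d‖ = 1 →
      (lineThrough a d ∩ (proj u '' L)).Nonempty →
      lineThrough a d ∩ intrinsicInterior ℝ (proj u '' L) = ∅ →
      Metric.diam ((proj u '' K) ∩ lineThrough a d) = 1)
    {w x d : E3} (hw : ‖w‖ = 1) (hx : IsSupp L w x) (hd : ‖d‖ = 1) (hwd : ⟪w, d⟫ = 0) :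
    (∀ p ∈ K, ∀ q ∈ K, ⟪w, p⟫ = ⟪w, x⟫ → ⟪w, q⟫ = ⟪w, x⟫ → ⟪d, p - q⟫ ≤ 1) ∧
    ∃ p ∈ K, ∃ q ∈ K, ⟪w, p⟫ = ⟪w, x⟫ ∧ ⟪w, q⟫ = ⟪w, x⟫ ∧ ⟪d, p - q⟫ = 1 := by
  obtain ⟨u, hu, hwu, hdu⟩ := exists_unit_perp w d
  have hww : ⟪w, w⟫ = 1 := by rw [real_inner_self_eq_norm_sq, hw]; norm_num
  have hdd : ⟪d, d⟫ = 1 := by rw [real_inner_self_eq_norm_sq, hd]; norm_num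
  have hproj : ∀ p, proj u p = ⟪w, p⟫ • w + ⟪d, p⟫ • d := by
    intro p
    have h := orthonormal_expand hw hd hu hwd hwu hdu p
    rw [proj, real_inner_comm]
    nth_rewrite 1 [h]
    abel
  have hwproj : ∀ p, ⟪w, proj u p⟫ = ⟪w, p⟫ := by
    intro p
    rw [proj, inner_sub_right, inner_smul_right, hwu, mul_zero, sub_zero]
  have hmem : ∀ p, ⟪w, p⟫ = ⟪w, x⟫ → proj u p ∈ lineThrough (⟪w, x⟫ • w) d := by
    intro p hp
    exact ⟨⟪d, p⟫, by rw [hproj, hp]⟩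
  have hline : ∀ z ∈ lineThrough (⟪w, x⟫ • w) d, ⟪w, z⟫ = ⟪w, x⟫ := by
    rintro z ⟨t, rfl⟩
    rw [inner_add_right, inner_smul_right, inner_smul_right, hwd, hww]
    ring
  have hdiam := hchord u hu (⟪w, x⟫ • w) d (by rw [inner_smul_left, hwu, mul_zero]) hdu hd
    ⟨proj u x, hmem x rfl, x, hx.1, rfl⟩ (by
      rw [Set.eq_empty_iff_forall_notMem]
      rintro z ⟨hz1, hz2⟩
      obtain ⟨y, hy, hyx⟩ := hx.exists_lt hLint hw
      refine not_mem_intrinsicInterior (w := w) (y := proj u y) ?_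
        (Set.mem_image_of_mem (proj u) hy) ?_ hz2
      · rintro _ ⟨p, hp, rfl⟩
        rw [hwproj, hline z hz1]
        exact hx.2 p hp
      · rw [hwproj, hline z hz1]
        exact hyx)
  have hdist : ∀ p q, ⟪w, p⟫ = ⟪w, x⟫ → ⟪w, q⟫ = ⟪w, x⟫ →
      dist (proj u p) (proj u q) = |⟪d, p - q⟫| := by
    intro p q hp hq
    rw [dist_eq_norm, hproj, hproj, hp, hq, add_sub_add_left_eq_sub, ← sub_smul, norm_smul, hd,
      mul_one, inner_sub_right, Real.norm_eq_abs]
  have hcont : Continuous (proj u) := by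
    unfold proj
    fun_prop
  have hbdd : Bornology.IsBounded ((proj u '' K) ∩ lineThrough (⟪w, x⟫ • w) d) :=
    (hKcpt.image hcont).isBounded.subset Set.inter_subset_left
  have hle : ∀ p ∈ K, ∀ q ∈ K, ⟪w, p⟫ = ⟪w, x⟫ → ⟪w, q⟫ = ⟪w, x⟫ → ⟪d, p - q⟫ ≤ 1 := by
    intro p hp q hq hpw hqw
    have h := Metric.dist_le_diam_of_mem hbdd (x := proj u p) (y := proj u q)
      ⟨⟨p, hp, rfl⟩, hmem p hpw⟩ ⟨⟨q, hq, rfl⟩, hmem q hqw⟩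
    rw [hdiam, hdist p q hpw hqw] at h
    exact (le_abs_self _).trans h
  refine ⟨hle, ?_⟩
  have hcpt : IsCompact (K ∩ {p | ⟪w, p⟫ = ⟪w, x⟫}) :=
    hKcpt.inter_right (isClosed_eq (by fun_prop) (by fun_prop))
  have hne : (K ∩ {p | ⟪w, p⟫ = ⟪w, x⟫}).Nonempty := ⟨x, hLK hx.1, rfl⟩
  obtain ⟨p, hp, hpmax⟩ := hcpt.exists_isMaxOn hne (f := fun y => ⟪d, y⟫) (by fun_prop)
  obtain ⟨q, hq, hqmin⟩ := hcpt.exists_isMinOn hne (f := fun y => ⟪d, y⟫) (by fun_prop)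
  refine ⟨p, hp.1, q, hq.1, hp.2, hq.2, le_antisymm (hle p hp.1 q hq.1 hp.2 hq.2) ?_⟩
  rw [← hdiam]
  have hmm : ∀ a ∈ K, ∀ b ∈ K, ⟪w, a⟫ = ⟪w, x⟫ → ⟪w, b⟫ = ⟪w, x⟫ →
      ⟪d, a - b⟫ ≤ ⟪d, p - q⟫ := by
    intro a ha b hb haw hbw
    have h1 : ⟪d, a⟫ ≤ ⟪d, p⟫ := hpmax ⟨ha, haw⟩
    have h2 : ⟪d, q⟫ ≤ ⟪d, b⟫ := hqmin ⟨hb, hbw⟩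
    rw [inner_sub_right, inner_sub_right]
    linarith
  refine Metric.diam_le_of_forall_dist_le ?_ ?_
  · simpa using hmm p hp.1 p hp.1 hp.2 hp.2
  · rintro _ ⟨⟨a, ha, rfl⟩, ha'⟩ _ ⟨⟨b, hb, rfl⟩, hb'⟩
    have haw : ⟪w, a⟫ = ⟪w, x⟫ := by rw [← hwproj]; exact hline _ ha'
    have hbw : ⟪w, b⟫ = ⟪w, x⟫ := by rw [← hwproj]; exact hline _ hb'
    rw [hdist a b haw hbw, abs_le]
    constructor
    · have := hmm b hb a ha hbw haw
      rw [← neg_sub, inner_neg_right] at this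
      linarith
    · exact hmm a ha b hb haw hbw

/-- The sections of `K` by the planes supporting `L` are bodies of constant width `1`, in
the form used below: diameter at most `1`, and a chord of length `1` in each direction. -/
def ConstWidthSections (K L : Set E3) : Prop :=
  ∀ w x : E3, ‖w‖ = 1 → IsSupp L w x →
    (∀ p ∈ K, ∀ q ∈ K, ⟪w, p⟫ = ⟪w, x⟫ → ⟪w, q⟫ = ⟪w, x⟫ → ‖p - q‖ ≤ 1) ∧
    ∀ d : E3, ‖d‖ = 1 → ⟪w, d⟫ = 0 → ∃ q ∈ K, q + d ∈ K ∧ ⟪w, q⟫ = ⟪w, x⟫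

lemma constWidthSections_of_chord {K L : Set E3} (hKcpt : IsCompact K)
    (hLint : (interior L).Nonempty) (hLK : L ⊆ K)
    (hchord : ∀ u : E3, ‖u‖ = 1 → ∀ a d : E3, ⟪a, u⟫ = 0 → ⟪d, u⟫ = 0 → ‖d‖ = 1 →
      (lineThrough a d ∩ (proj u '' L)).Nonempty →
      lineThrough a d ∩ intrinsicInterior ℝ (proj u '' L) = ∅ →
      Metric.diam ((proj u '' K) ∩ lineThrough a d) = 1) : ConstWidthSections K L := by
  intro w x hw hx
  have hdiam : ∀ p ∈ K, ∀ q ∈ K, ⟪w, p⟫ = ⟪w, x⟫ → ⟪w, q⟫ = ⟪w, x⟫ → ‖p - q‖ ≤ 1 := by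
    intro p hp q hq hpw hqw
    by_cases h0 : p - q = 0
    · simp [h0]
    have hn : ‖p - q‖ ≠ 0 := norm_ne_zero_iff.2 h0
    have h := (section_width hKcpt hLint hLK hchord (d := ‖p - q‖⁻¹ • (p - q)) hw hx
      (by rw [norm_smul, norm_inv, norm_norm, inv_mul_cancel₀ hn])
      (by rw [inner_smul_right, inner_sub_right, hpw, hqw, sub_self, mul_zero])).1 p hp q hq hpw hqw
    rw [real_inner_smul_left, real_inner_self_eq_norm_sq] at h
    field_simp at h
    exact h
  refine ⟨hdiam, fun d hd hwd => ?_⟩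
  obtain ⟨p, hp, q, hq, hpw, hqw, hpq⟩ :=
    (section_width hKcpt hLint hLK hchord hw hx hd hwd).2
  have h := eq_of_inner_eq_one (hdiam p hp q hq hpw hqw) hd hpq
  refine ⟨q, hq, ?_, hqw⟩
  rw [← h]
  simpa using hp

/-- In a section of constant width `1`, the chord of length `1` in a given direction is unique. -/
lemma ConstWidthSections.unique {K L : Set E3} (hS : ConstWidthSections K L) {w x d : E3}
    (hw : ‖w‖ = 1) (hx : IsSupp L w x) (hd : ‖d‖ = 1) (hwd : ⟪w, d⟫ = 0) {p q : E3}
    (hp : p ∈ K) (hpd : p + d ∈ K) (hpw : ⟪w, p⟫ = ⟪w, x⟫)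
    (hq : q ∈ K) (hqd : q + d ∈ K) (hqw : ⟪w, q⟫ = ⟪w, x⟫) : p = q := by
  have hpw' : ⟪w, p + d⟫ = ⟪w, x⟫ := by rw [inner_add_right, hwd, hpw, add_zero]
  have hqw' : ⟪w, q + d⟫ = ⟪w, x⟫ := by rw [inner_add_right, hwd, hqw, add_zero]
  have h1 := (hS w x hw hx).1 _ hpd _ hq hpw' hqw
  have h2 := (hS w x hw hx).1 _ hqd _ hp hqw' hpw
  have e1 : p + d - q = d + (p - q) := by abel
  have e2 : q + d - p = d - (p - q) := by abel
  rw [e1] at h1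
  rw [e2] at h2
  have h3 := parallelogram_law_with_norm ℝ d (p - q)
  rw [hd] at h3
  have h4 : ‖p - q‖ = 0 := by
    nlinarith [norm_nonneg (d + (p - q)), norm_nonneg (d - (p - q)), norm_nonneg (p - q)]
  exact sub_eq_zero.1 (norm_eq_zero.1 h4)

open scoped Pointwise in
/-- Every line tangent to `L` contains a chord of `K` of length `1`. For a fixed direction `d`,
the set `K ∩ (K - d)` reaches every plane parallel to `d` supporting `L`, so by separation
`L ⊆ (K ∩ (K - d)) + ℝ d`. -/
lemma exists_unit_chord_through {K L : Set E3} (hKcpt : IsCompact K) (hKconv : Convex ℝ K)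
    (hLcpt : IsCompact L)
    (hLint : (interior L).Nonempty) (hS : ConstWidthSections K L) {w x d : E3}
    (hw : ‖w‖ = 1) (hx : IsSupp L w x) (hd : ‖d‖ = 1) (hwd : ⟪w, d⟫ = 0) :
    ∃ t : ℝ, x + t • d ∈ K ∧ x + t • d + d ∈ K := by
  have hLne : L.Nonempty := hLint.mono interior_subset
  set M : Set E3 := K ∩ (fun y => y + d) ⁻¹' K with hM
  have hMcpt : IsCompact M :=
    hKcpt.inter_right (hKcpt.isClosed.preimage (by fun_prop))
  have hMconv : Convex ℝ M := by
    refine hKconv.inter ?_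
    have := hKconv.translate_preimage_left d
    exact this
  set ℓ : Submodule ℝ E3 := Submodule.span ℝ {d}
  by_contra hcon
  have hnot : x ∉ M + (ℓ : Set E3) := by
    rintro ⟨m, hm, v, hv, hmv⟩
    obtain ⟨t, rfl⟩ := Submodule.mem_span_singleton.1 hv
    apply hcon
    have hxm : x + (-t) • d = m := by
      rw [← hmv]
      module
    exact ⟨-t, by rw [hxm]; exact hm.1, by rw [hxm]; exact hm.2⟩
  have hclosed : IsClosed (M + (ℓ : Set E3)) := by
    rw [add_comm]
    exact (Submodule.closed_of_finiteDimensional ℓ).add_right_of_isCompact hMcpt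
  obtain ⟨f, c, hfc, hcx⟩ :=
    geometric_hahn_banach_closed_point (hMconv.add ℓ.convex) hclosed hnot
  obtain ⟨v, rfl⟩ := (InnerProductSpace.toDual ℝ E3).surjective f
  simp only [InnerProductSpace.toDual_apply_apply] at hfc hcx
  obtain ⟨q, hq, hqd, hqw⟩ := (hS w x hw hx).2 d hd hwd
  have hqt : ∀ t : ℝ, ⟪v, q⟫ + t * ⟪v, d⟫ < c := by
    intro t
    have := hfc (q + t • d) ⟨q, ⟨hq, hqd⟩, t • d, Submodule.mem_span_singleton.2 ⟨t, rfl⟩, rfl⟩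
    rwa [inner_add_right, inner_smul_right] at this
  have hvd : ⟪v, d⟫ = 0 := by
    by_contra h0
    have := hqt ((c - ⟪v, q⟫) / ⟪v, d⟫)
    rw [div_mul_cancel₀ _ h0] at this
    linarith
  have hv0 : v ≠ 0 := by
    rintro rfl
    have := hqt 0
    simp at this hcx
    linarith
  have hn : ‖v‖ ≠ 0 := norm_ne_zero_iff.2 hv0
  have hnp : 0 < ‖v‖ := norm_pos_iff.2 hv0
  obtain ⟨x', hx'⟩ := exists_isSupp hLcpt hLne (‖v‖⁻¹ • v)
  obtain ⟨m, hm, hmd, hmw⟩ := (hS (‖v‖⁻¹ • v) x'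
    (by rw [norm_smul, norm_inv, norm_norm, inv_mul_cancel₀ hn]) hx').2 d hd
    (by rw [real_inner_smul_left, hvd, mul_zero])
  have h1 := hx'.2 x hx.1
  rw [← hmw, real_inner_smul_left, real_inner_smul_left] at h1
  have h2 : ⟪v, x⟫ ≤ ⟪v, m⟫ := le_of_mul_le_mul_left h1 (inv_pos.2 hnp)
  have h3 := hfc m ⟨m, ⟨hm, hmd⟩, 0, ℓ.zero_mem, add_zero m⟩
  linarith

/-! ### The sections are discs -/

lemma const_of_quadratic_s12 {g : ℝ → ℝ} (hg : ∀ a b, g a - g b ≤ (a - b) ^ 2) (a b : ℝ) :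
    g a = g b := by
  have hder : ∀ x, HasDerivAt g 0 x := by
    intro x
    rw [hasDerivAt_iff_isLittleO]
    have h1 : (fun x' => g x' - g x - (x' - x) • (0 : ℝ)) =O[nhds x] fun x' => (x' - x) ^ 2 := by
      refine Asymptotics.IsBigO.of_bound 1 (Filter.Eventually.of_forall fun x' => ?_)
      rw [smul_zero, sub_zero, one_mul, Real.norm_eq_abs, Real.norm_eq_abs,
        abs_of_nonneg (sq_nonneg (x' - x))]
      refine abs_le.2 ⟨?_, hg x' x⟩
      have := hg x x'
      nlinarith
    refine h1.trans_isLittleO ?_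
    have h2 : Filter.Tendsto (fun x' : ℝ => x' - x) (nhds x) (nhds 0) := by
      have : Continuous fun x' : ℝ => x' - x := by fun_prop
      simpa using this.tendsto x
    exact (Asymptotics.isLittleO_pow_id (𝕜 := ℝ) one_lt_two).comp_tendsto h2
  exact is_const_of_deriv_eq_zero (fun x => (hder x).differentiableAt) (fun x => (hder x).deriv) a b

/-- The section of `K` by a plane supporting `L` at `x` is the disc of radius `1/2` centred
at `x`. If `r d` is the distance from `x` to the boundary in direction `d`, then
`r d + r (-d) = 1`, and the chord of length `1` through `x` is a double normal, so
`r d' * ⟪d, d'⟫ ≤ r d`. Hence `r` has quadratically small increments along circles and is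
constant. -/
lemma section_disc {K L : Set E3} (hKcpt : IsCompact K) (hKconv : Convex ℝ K)
    (hLcpt : IsCompact L) (hLint : (interior L).Nonempty) (hLK : L ⊆ K)
    (hS : ConstWidthSections K L) {w x : E3} (hw : ‖w‖ = 1) (hx : IsSupp L w x) :
    (∀ d : E3, ‖d‖ = 1 → ⟪w, d⟫ = 0 → x + (1 / 2 : ℝ) • d ∈ K) ∧
    ∀ p ∈ K, ⟪w, p⟫ = ⟪w, x⟫ → ‖p - x‖ ≤ 1 / 2 := by
  have hex : ∀ d : E3, ∃ r : ℝ, ‖d‖ = 1 → ⟪w, d⟫ = 0 → x + r • d ∈ K ∧ x + (r - 1) • d ∈ K := by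
    intro d
    by_cases h : ‖d‖ = 1 ∧ ⟪w, d⟫ = 0
    · obtain ⟨t, ht1, ht2⟩ :=
        exists_unit_chord_through hKcpt hKconv hLcpt hLint hS hw hx h.1 h.2
      refine ⟨t + 1, fun _ _ => ⟨?_, ?_⟩⟩
      · convert ht2 using 1
        module
      · convert ht1 using 1
        module
    · exact ⟨0, fun h1 h2 => absurd ⟨h1, h2⟩ h⟩
  choose r hr using hex
  have hin : ∀ d : E3, ⟪w, d⟫ = 0 → ∀ s : ℝ, ⟪w, x + s • d⟫ = ⟪w, x⟫ := by
    intro d hd s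
    rw [inner_add_right, inner_smul_right, hd, mul_zero, add_zero]
  have hneg : ∀ d : E3, ‖d‖ = 1 → ⟪w, d⟫ = 0 → r (-d) = 1 - r d := by
    intro d hd hwd
    have h1 := hr d hd hwd
    have h2 := hr (-d) (by rwa [norm_neg]) (by rw [inner_neg_right, hwd, neg_zero])
    have h3 : x + (r d - 1) • d = x + (-r (-d)) • d := by
      refine hS.unique hw hx hd hwd h1.2 ?_ (hin d hwd _) ?_ ?_ (hin d hwd _)
      · convert h1.1 using 1
        module
      · convert h2.1 using 1
        module
      · convert h2.2 using 1
        module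
    have h4 : (r d - 1 + r (-d)) • d = 0 := by
      have := add_left_cancel h3
      rw [add_smul, this]
      module
    have hd0 : d ≠ 0 := by
      rintro rfl
      simp at hd
    rcases smul_eq_zero.1 h4 with h5 | h5
    · linarith
    · exact absurd h5 hd0
  have hsup : ∀ d : E3, ‖d‖ = 1 → ⟪w, d⟫ = 0 → ∀ p ∈ K, ⟪w, p⟫ = ⟪w, x⟫ →
      ⟪d, p - x⟫ ≤ r d := by
    intro d hd hwd p hp hpw
    have h1 := (hS w x hw hx).1 p hp _ (hr d hd hwd).2 hpw (hin d hwd _)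
    have h2 := real_inner_le_norm d (p - (x + (r d - 1) • d))
    have h3 : ⟪d, p - (x + (r d - 1) • d)⟫ = ⟪d, p - x⟫ - (r d - 1) := by
      rw [← sub_sub, inner_sub_right, inner_smul_right, real_inner_self_eq_norm_sq, hd]
      ring
    rw [hd, one_mul, h3] at h2
    linarith
  have hr0 : ∀ d : E3, ‖d‖ = 1 → ⟪w, d⟫ = 0 → 0 ≤ r d := by
    intro d hd hwd
    simpa using hsup d hd hwd x (hLK hx.1) rfl
  have hr1 : ∀ d : E3, ‖d‖ = 1 → ⟪w, d⟫ = 0 → r d ≤ 1 := by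
    intro d hd hwd
    have h1 := hneg d hd hwd
    have h2 := hr0 (-d) (by rwa [norm_neg]) (by rw [inner_neg_right, hwd, neg_zero])
    linarith
  have hhalf : ∀ d : E3, ‖d‖ = 1 → ⟪w, d⟫ = 0 → r d = 1 / 2 := by
    intro d hd hwd
    obtain ⟨e, he, hwe, hde⟩ := exists_unit_perp w d
    let c : ℝ → E3 := fun θ => Real.cos θ • d + Real.sin θ • e
    have hcc : ∀ a b, ⟪c a, c b⟫ = Real.cos (a - b) := by
      intro a b
      simp only [c, inner_add_left, inner_add_right, real_inner_smul_left, inner_smul_right, hde,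
        real_inner_comm d e, real_inner_self_eq_norm_sq, hd, he, Real.cos_sub]
      ring
    have hc1 : ∀ a, ‖c a‖ = 1 := by
      intro a
      have h1 := hcc a a
      rw [real_inner_self_eq_norm_sq, sub_self, Real.cos_zero] at h1
      nlinarith [norm_nonneg (c a)]
    have hcw : ∀ a, ⟪w, c a⟫ = 0 := by
      intro a
      simp [c, inner_add_right, inner_smul_right, hwd, hwe]
    have hconst := const_of_quadratic_s12 (g := fun θ => r (c θ)) (by
      intro a b
      have h1 := hsup (c b) (hc1 b) (hcw b) _ (hr (c a) (hc1 a) (hcw a)).1 (hin _ (hcw a) _)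
      rw [add_sub_cancel_left, inner_smul_right, hcc] at h1
      have h2 := hr0 (c a) (hc1 a) (hcw a)
      have h3 := hr1 (c a) (hc1 a) (hcw a)
      have h4 := Real.one_sub_sq_div_two_le_cos (x := b - a)
      have h5 : 0 ≤ 1 - Real.cos (b - a) := by linarith [Real.cos_le_one (b - a)]
      have h6 : r (c a) * (1 - Real.cos (b - a)) ≤ 1 * (1 - Real.cos (b - a)) :=
        mul_le_mul_of_nonneg_right h3 h5
      have h7 : (b - a) ^ 2 = (a - b) ^ 2 := by ring
      have h8 := sq_nonneg (a - b)
      show r (c a) - r (c b) ≤ _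
      linarith) 0 Real.pi
    have h0 : c 0 = d := by simp [c]
    have hpi : c Real.pi = -d := by simp [c]
    simp only [h0, hpi] at hconst
    have := hneg d hd hwd
    linarith
  refine ⟨fun d hd hwd => ?_, fun p hp hpw => ?_⟩
  · rw [← hhalf d hd hwd]
    exact (hr d hd hwd).1
  · by_cases h0 : p - x = 0
    · rw [h0, norm_zero]
      norm_num
    have hn : ‖p - x‖ ≠ 0 := norm_ne_zero_iff.2 h0
    have hd1 : ‖‖p - x‖⁻¹ • (p - x)‖ = 1 := by
      rw [norm_smul, norm_inv, norm_norm, inv_mul_cancel₀ hn]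
    have hd2 : ⟪w, ‖p - x‖⁻¹ • (p - x)⟫ = 0 := by
      rw [inner_smul_right, inner_sub_right, hpw, sub_self, mul_zero]
    have h := hsup _ hd1 hd2 p hp hpw
    rw [hhalf _ hd1 hd2, real_inner_smul_left, real_inner_self_eq_norm_sq] at h
    have e : ‖p - x‖⁻¹ * ‖p - x‖ ^ 2 = ‖p - x‖ := by field_simp
    rwa [e] at h

/-- Every section of `K` by a plane supporting `L` at `x` is the disc of radius `1/2`
centred at `x`: it contains the boundary circle of that disc and lies in the disc. -/
def DiscSections (K L : Set E3) : Prop :=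
  ∀ w x : E3, ‖w‖ = 1 → IsSupp L w x →
    (∀ d : E3, ‖d‖ = 1 → ⟪w, d⟫ = 0 → x + (1 / 2 : ℝ) • d ∈ K) ∧
    ∀ p ∈ K, ⟪w, p⟫ = ⟪w, x⟫ → ‖p - x‖ ≤ 1 / 2

lemma DiscSections.mem_iff {K L : Set E3} (hKconv : Convex ℝ K) (hD : DiscSections K L)
    {w x : E3} (hw : ‖w‖ = 1) (hx : IsSupp L w x) {p : E3} (hp : ⟪w, p⟫ = ⟪w, x⟫) :
    p ∈ K ↔ ‖p - x‖ ≤ 1 / 2 := by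
  refine ⟨fun h => (hD w x hw hx).2 p h hp, fun h => ?_⟩
  obtain ⟨e, he, hwe, -⟩ := exists_unit_perp w w
  -- `p` lies on the diameter of the disc with direction `d`
  obtain ⟨d, hd, hwd, t, ht0, ht, rfl⟩ : ∃ d : E3, ‖d‖ = 1 ∧ ⟪w, d⟫ = 0 ∧
      ∃ t : ℝ, 0 ≤ t ∧ t ≤ 1 / 2 ∧ p = x + t • d := by
    by_cases h0 : p - x = 0
    · exact ⟨e, he, hwe, 0, le_rfl, by norm_num, by rw [zero_smul, add_zero]; exact sub_eq_zero.1 h0⟩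
    have hn : ‖p - x‖ ≠ 0 := norm_ne_zero_iff.2 h0
    refine ⟨‖p - x‖⁻¹ • (p - x), by rw [norm_smul, norm_inv, norm_norm, inv_mul_cancel₀ hn],
      by rw [inner_smul_right, inner_sub_right, hp, sub_self, mul_zero], ‖p - x‖, norm_nonneg _, h, ?_⟩
    rw [smul_smul, mul_inv_cancel₀ hn, one_smul, add_sub_cancel]
  have h1 := (hD w x hw hx).1 d hd hwd
  have h2 := (hD w x hw hx).1 (-d) (by rwa [norm_neg]) (by rw [inner_neg_right, hwd, neg_zero])
  have h3 := hKconv h1 h2 (a := 1 / 2 + t) (b := 1 / 2 - t) (by linarith) (by linarith) (by ring)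
  convert h3 using 1
  module

lemma DiscSections.unique {K L : Set E3} (hD : DiscSections K L)
    {w x y : E3} (hw : ‖w‖ = 1) (hx : IsSupp L w x) (hy : IsSupp L w y) : x = y := by
  by_contra hne
  have hxy : ⟪w, x⟫ = ⟪w, y⟫ := le_antisymm (hy.2 x hx.1) (hx.2 y hy.1)
  have h0 : x - y ≠ 0 := sub_ne_zero.2 hne
  have hn : ‖x - y‖ ≠ 0 := norm_ne_zero_iff.2 h0
  have hnp : 0 < ‖x - y‖ := norm_pos_iff.2 h0
  have hd2 : ⟪w, ‖x - y‖⁻¹ • (x - y)⟫ = 0 := by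
    rw [inner_smul_right, inner_sub_right, hxy, sub_self, mul_zero]
  have h1 := (hD w x hw hx).1 (‖x - y‖⁻¹ • (x - y))
    (by rw [norm_smul, norm_inv, norm_norm, inv_mul_cancel₀ hn]) hd2
  have h2 := (hD w y hw hy).2 _ h1
    (by rw [inner_add_right, inner_smul_right, hd2, mul_zero, add_zero, hxy])
  have h3 : x + (1 / 2 : ℝ) • ‖x - y‖⁻¹ • (x - y) - y = (1 + 1 / 2 * ‖x - y‖⁻¹) • (x - y) := by
    module
  rw [h3, norm_smul, Real.norm_eq_abs, abs_of_pos (by positivity)] at h2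
  have h4 : (1 + 1 / 2 * ‖x - y‖⁻¹) * ‖x - y‖ = ‖x - y‖ + 1 / 2 := by field_simp
  linarith

/-! ### Neighbouring support points of `L` -/

/-- Uniform continuity of the map sending an outer normal to its support point. -/
lemma exists_uniform {K L : Set E3} (hLcpt : IsCompact L) (hD : DiscSections K L)
    {ε : ℝ} (hε : 0 < ε) : ∃ δ > 0, ∀ n₁ n₂ x₁ x₂ : E3, ‖n₁‖ = 1 → ‖n₂‖ = 1 →
      IsSupp L n₁ x₁ → IsSupp L n₂ x₂ → ‖n₁ - n₂‖ < δ → ‖x₁ - x₂‖ < ε := by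
  -- the set of pairs of support points at distance at least `ε` is compact
  let P : Set ((E3 × E3) × (E3 × E3)) :=
    ((sphere 0 1 ×ˢ L) ×ˢ (sphere 0 1 ×ˢ L)) ∩
      {z | (∀ y ∈ L, ⟪z.1.1, y⟫ ≤ ⟪z.1.1, z.1.2⟫) ∧ (∀ y ∈ L, ⟪z.2.1, y⟫ ≤ ⟪z.2.1, z.2.2⟫) ∧
        ε ≤ ‖z.1.2 - z.2.2‖}
  have hPc : IsCompact P := by
    have hs : IsCompact (sphere (0 : E3) 1 ×ˢ L) := (isCompact_sphere 0 1).prod hLcpt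
    refine (hs.prod hs).inter_right ?_
    simp only [Set.ofPred_and, Set.ofPred_forall]
    refine IsClosed.inter ?_ (IsClosed.inter ?_ ?_)
    · exact isClosed_biInter fun y _ => isClosed_le (by fun_prop) (by fun_prop)
    · exact isClosed_biInter fun y _ => isClosed_le (by fun_prop) (by fun_prop)
    · exact isClosed_le (by fun_prop) (by fun_prop)
  have hmem : ∀ n₁ n₂ x₁ x₂ : E3, ‖n₁‖ = 1 → ‖n₂‖ = 1 → IsSupp L n₁ x₁ → IsSupp L n₂ x₂ →
      ε ≤ ‖x₁ - x₂‖ → ((n₁, x₁), (n₂, x₂)) ∈ P := by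
    intro n₁ n₂ x₁ x₂ h₁ h₂ hx₁ hx₂ h
    exact ⟨⟨⟨by simpa using h₁, hx₁.1⟩, ⟨by simpa using h₂, hx₂.1⟩⟩, hx₁.2, hx₂.2, h⟩
  rcases P.eq_empty_or_nonempty with hP | hP
  · refine ⟨1, one_pos, fun n₁ n₂ x₁ x₂ h₁ h₂ hx₁ hx₂ _ => ?_⟩
    by_contra! h
    have := hmem n₁ n₂ x₁ x₂ h₁ h₂ hx₁ hx₂ h
    rw [hP] at this
    exact this
  · obtain ⟨⟨⟨m₁, y₁⟩, m₂, y₂⟩, hz, hmin⟩ :=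
      hPc.exists_isMinOn hP (f := fun z => ‖z.1.1 - z.2.1‖) (by fun_prop)
    obtain ⟨⟨⟨hm₁, hy₁⟩, ⟨hm₂, hy₂⟩⟩, hs₁, hs₂, hy⟩ := hz
    simp only [mem_sphere_iff_norm, sub_zero] at hm₁ hm₂ hy₁ hy₂ hs₁ hs₂ hy
    refine ⟨‖m₁ - m₂‖, ?_, fun n₁ n₂ x₁ x₂ h₁ h₂ hx₁ hx₂ hlt => ?_⟩
    · rw [gt_iff_lt, norm_pos_iff, sub_ne_zero]
      rintro rfl
      have := hD.unique hm₁ ⟨hy₁, hs₁⟩ ⟨hy₂, hs₂⟩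
      rw [this, sub_self, norm_zero] at hy
      linarith
    · by_contra! h
      have := isMinOn_iff.1 hmin _ (hmem n₁ n₂ x₁ x₂ h₁ h₂ hx₁ hx₂ h)
      dsimp only at this
      linarith

/-- Two monic quadratics with the same nonpositivity set, that of the first having nonempty
interior, coincide. -/
lemma quadratic_eq {a₀ b₁ b₀ : ℝ} (h0 : a₀ < 0)
    (h : ∀ t : ℝ, t ^ 2 + a₀ ≤ 0 ↔ t ^ 2 + b₁ * t + b₀ ≤ 0) : b₁ = 0 ∧ b₀ = a₀ := by
  set s := Real.sqrt (-a₀) with hs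
  have hs0 : 0 < s := Real.sqrt_pos.2 (by linarith)
  have hs2 : s ^ 2 = -a₀ := Real.sq_sqrt (by linarith)
  -- outside `[-s, s]` the second quadratic is positive, so at `± s` it is nonnegative
  have hout : ∀ t : ℝ, s < |t| → 0 ≤ t ^ 2 + b₁ * t + b₀ := by
    intro t ht
    by_contra! hneg
    have h1 := (h t).2 hneg.le
    have h2 : s ^ 2 < t ^ 2 := by
      rw [← sq_abs t]
      nlinarith
    linarith
  have hc : Continuous fun t : ℝ => t ^ 2 + b₁ * t + b₀ := by fun_prop
  have hp : 0 ≤ s ^ 2 + b₁ * s + b₀ := by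
    refine ge_of_tendsto (x := nhdsWithin s (Set.Ioi s))
      ((hc.tendsto s).mono_left nhdsWithin_le_nhds) ?_
    filter_upwards [self_mem_nhdsWithin] with t ht
    exact hout t (lt_of_lt_of_le ht (le_abs_self t))
  have hm : 0 ≤ (-s) ^ 2 + b₁ * (-s) + b₀ := by
    refine ge_of_tendsto (x := nhdsWithin (-s) (Set.Iio (-s)))
      ((hc.tendsto (-s)).mono_left nhdsWithin_le_nhds) ?_
    filter_upwards [self_mem_nhdsWithin] with t ht
    have ht' : t < -s := ht
    exact hout t (lt_of_lt_of_le (by linarith) (neg_le_abs t))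
  have hp' := (h s).1 (by linarith)
  have hm' := (h (-s)).1 (by rw [neg_sq]; linarith)
  have hb : b₁ * s = 0 := by linarith
  rcases mul_eq_zero.1 hb with hb | hb
  · exact ⟨hb, by rw [hb] at hp hp'; linarith⟩
  · linarith

/-- The normals of `L` at two nearby boundary points meet at a point equidistant from both:
the two discs of `K` share the chord on the intersection line of their planes, hence are
mirror images of each other. -/
lemma sub_eq_smul_of_close {K L : Set E3} (hKconv : Convex ℝ K) (hD : DiscSections K L)
    {n₁ n₂ x₁ x₂ : E3} (h₁ : ‖n₁‖ = 1) (h₂ : ‖n₂‖ = 1) (hx₁ : IsSupp L n₁ x₁)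
    (hx₂ : IsSupp L n₂ x₂) (hn : ‖n₁ - n₂‖ < 1) (hx : ‖x₁ - x₂‖ < 1 / 4) :
    ∃ s : ℝ, x₁ - x₂ = s • (n₁ - n₂) := by
  by_cases hne : n₁ = n₂
  · subst hne
    exact ⟨0, by rw [hD.unique h₁ hx₁ hx₂, sub_self, zero_smul]⟩
  have n11 : ⟪n₁, n₁⟫ = 1 := by rw [real_inner_self_eq_norm_sq, h₁, one_pow]
  have n22 : ⟪n₂, n₂⟫ = 1 := by rw [real_inner_self_eq_norm_sq, h₂, one_pow]
  set c := ⟪n₁, n₂⟫ with hc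
  have n21 : ⟪n₂, n₁⟫ = c := real_inner_comm _ _
  have hsub : ‖n₁ - n₂‖ ^ 2 = 2 - 2 * c := by
    rw [norm_sub_sq_real, h₁, h₂]
    ring
  have hc1 : c < 1 := by
    have : 0 < ‖n₁ - n₂‖ := norm_pos_iff.2 (sub_ne_zero.2 hne)
    nlinarith
  have hc0 : 1 / 2 < c := by nlinarith [norm_nonneg (n₁ - n₂)]
  have hD0 : 0 < 1 - c ^ 2 := by nlinarith
  obtain ⟨e, he, h1e, h2e⟩ := exists_unit_perp n₁ n₂
  have hee : ⟪e, e⟫ = 1 := by rw [real_inner_self_eq_norm_sq, he, one_pow]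
  have he1 : ⟪e, n₁⟫ = 0 := by rw [real_inner_comm, h1e]
  have he2 : ⟪e, n₂⟫ = 0 := by rw [real_inner_comm, h2e]
  -- a vector orthogonal to `n₁` and `n₂` and `e` vanishes
  have hspan : ∀ v : E3, ⟪n₁, v⟫ = 0 → ⟪n₂, v⟫ = 0 → ⟪e, v⟫ = 0 → v = 0 := by
    intro v hv1 hv2 hve
    have hk : ‖n₂ - c • n₁‖ ^ 2 = 1 - c ^ 2 := by
      rw [norm_sub_sq_real, norm_smul, h₁, h₂, inner_smul_right, n21, Real.norm_eq_abs, mul_one,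
        sq_abs]
      ring
    have hk0 : ‖n₂ - c • n₁‖ ≠ 0 := by
      intro h
      rw [h] at hk
      nlinarith
    refine eq_zero_of_perp h₁ (b := ‖n₂ - c • n₁‖⁻¹ • (n₂ - c • n₁))
      (by rw [norm_smul, norm_inv, norm_norm, inv_mul_cancel₀ hk0]) he ?_ h1e ?_ hv1 ?_ hve
    · rw [inner_smul_right, inner_sub_right, inner_smul_right, n11, ← hc]
      ring
    · rw [real_inner_smul_left, inner_sub_left, real_inner_smul_left, h2e, h1e]
      ring
    · rw [real_inner_smul_left, inner_sub_left, real_inner_smul_left, hv1, hv2]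
      ring
  -- `m` is the foot of the perpendicular from `x₁` to the line common to both planes
  set δ := ⟪n₂, x₂⟫ - ⟪n₂, x₁⟫ with hδ
  set α := δ / (1 - c ^ 2) with hα
  have hαD : α * (1 - c ^ 2) = δ := by rw [hα]; field_simp
  set m := x₁ + α • (n₂ - c • n₁) with hm
  have hm1 : ⟪n₁, m⟫ = ⟪n₁, x₁⟫ := by
    rw [hm, inner_add_right, inner_smul_right, inner_sub_right, inner_smul_right, n11, ← hc]
    ring
  have hm2 : ⟪n₂, m⟫ = ⟪n₂, x₂⟫ := by
    rw [hm, inner_add_right, inner_smul_right, inner_sub_right, inner_smul_right, n22, n21]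
    linarith
  have hmx1 : ‖m - x₁‖ ^ 2 = α ^ 2 * (1 - c ^ 2) := by
    rw [hm, add_sub_cancel_left, norm_smul, mul_pow, norm_sub_sq_real, norm_smul, h₁, h₂,
      inner_smul_right, n21, Real.norm_eq_abs, Real.norm_eq_abs, mul_one, sq_abs, sq_abs]
    ring
  have hem1 : ⟪m - x₁, e⟫ = 0 := by
    rw [hm, add_sub_cancel_left, real_inner_smul_left, inner_sub_left, real_inner_smul_left, h2e,
      h1e]
    ring
  have hδ0 : 0 ≤ δ := sub_nonneg.2 (hx₂.2 x₁ hx₁.1)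
  have hδle : δ ≤ ‖x₁ - x₂‖ * ‖n₁ - n₂‖ := by
    have h1 := real_inner_le_norm (x₁ - x₂) (n₁ - n₂)
    have h2 : ⟪x₁ - x₂, n₁ - n₂⟫ = ⟪n₁, x₁⟫ - ⟪n₁, x₂⟫ + δ := by
      rw [inner_sub_left, inner_sub_right, inner_sub_right, real_inner_comm n₁ x₁,
        real_inner_comm n₂ x₁, real_inner_comm n₁ x₂, real_inner_comm n₂ x₂, hδ]
      ring
    have h3 := hx₁.2 x₂ hx₂.1
    linarith
  have hclose : ‖m - x₁‖ ^ 2 < 1 / 4 := by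
    have h1 : δ ^ 2 ≤ (1 / 4) ^ 2 * (2 - 2 * c) := by
      rw [← hsub, ← mul_pow]
      refine pow_le_pow_left₀ hδ0 (hδle.trans ?_) 2
      exact mul_le_mul_of_nonneg_right hx.le (norm_nonneg _)
    have h2 : ‖m - x₁‖ ^ 2 * (1 - c ^ 2) = δ ^ 2 := by
      rw [hmx1, ← hαD]
      ring
    by_contra! h3
    have h4 : 1 / 4 * (1 - c ^ 2) ≤ δ ^ 2 := by
      rw [← h2]
      exact mul_le_mul_of_nonneg_right h3 hD0.le
    nlinarith
  have hline : ∀ t : ℝ, ‖m + t • e - x₁‖ ≤ 1 / 2 ↔ ‖m + t • e - x₂‖ ≤ 1 / 2 := by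
    intro t
    rw [← hD.mem_iff hKconv h₁ hx₁ (p := m + t • e)
        (by rw [inner_add_right, inner_smul_right, h1e, hm1, mul_zero, add_zero]),
      ← hD.mem_iff hKconv h₂ hx₂ (p := m + t • e)
        (by rw [inner_add_right, inner_smul_right, h2e, hm2, mul_zero, add_zero])]
  have hsq : ∀ (y : E3) (t : ℝ), ‖m + t • e - y‖ ≤ 1 / 2 ↔
      t ^ 2 + 2 * ⟪m - y, e⟫ * t + (‖m - y‖ ^ 2 - 1 / 4) ≤ 0 := by
    intro y t
    have h1 : ‖m + t • e - y‖ ^ 2 = ‖m - y‖ ^ 2 + 2 * ⟪m - y, e⟫ * t + t ^ 2 := by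
      rw [add_sub_right_comm, norm_add_sq_real, inner_smul_right, norm_smul, he, mul_one,
        Real.norm_eq_abs, sq_abs]
      ring
    rw [← sq_le_sq₀ (norm_nonneg _) (by norm_num), h1]
    constructor <;> intro h <;> linarith
  obtain ⟨hq1, hq2⟩ := quadratic_eq (a₀ := ‖m - x₁‖ ^ 2 - 1 / 4) (b₁ := 2 * ⟪m - x₂, e⟫)
    (b₀ := ‖m - x₂‖ ^ 2 - 1 / 4) (by linarith) (by
      intro t
      have := hline t
      rw [hsq, hsq, hem1] at this
      rw [← this]
      ring_nf)
  have hem2 : ⟪m - x₂, e⟫ = 0 := by linarith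
  -- similarly `m` is the foot of the perpendicular from `x₂`, at the same distance
  set δ' := ⟪n₁, x₁⟫ - ⟪n₁, x₂⟫ with hδ'
  have hδ'0 : 0 ≤ δ' := sub_nonneg.2 (hx₁.2 x₂ hx₂.1)
  set β := δ' / (1 - c ^ 2) with hβ
  have hβD : β * (1 - c ^ 2) = δ' := by rw [hβ]; field_simp
  have hmm : m - x₂ = β • (n₁ - c • n₂) := by
    rw [← sub_eq_zero]
    apply hspan
    · rw [inner_sub_right, inner_sub_right, hm1, inner_smul_right, inner_sub_right,
        inner_smul_right, n11, ← hc]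
      linarith
    · rw [inner_sub_right, inner_sub_right, hm2, inner_smul_right, inner_sub_right,
        inner_smul_right, n22, n21]
      ring
    · rw [inner_sub_right, real_inner_comm, hem2, inner_smul_right, inner_sub_right,
        inner_smul_right, he1, he2]
      ring
  have hmx2 : ‖m - x₂‖ ^ 2 = β ^ 2 * (1 - c ^ 2) := by
    rw [hmm, norm_smul, mul_pow, norm_sub_sq_real, norm_smul, h₁, h₂,
      inner_smul_right, ← hc, Real.norm_eq_abs, Real.norm_eq_abs, mul_one, sq_abs, sq_abs]
    ring
  have hab : α = β := by
    have h1 : α ^ 2 = β ^ 2 := by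
      have : α ^ 2 * (1 - c ^ 2) = β ^ 2 * (1 - c ^ 2) := by linarith
      exact mul_right_cancel₀ hD0.ne' this
    exact (sq_eq_sq₀ (div_nonneg hδ0 hD0.le) (div_nonneg hδ'0 hD0.le)).1 h1
  refine ⟨α * (1 + c), ?_⟩
  have h1 : x₁ - x₂ = (m - x₂) - α • (n₂ - c • n₁) := by
    rw [hm]
    abel
  rw [h1, hmm, ← hab]
  module

/-! ### From the normals of `L` to balls -/

/-- If the sides of a triangle `x₀ x₁ x₂` are multiples of those of a triangle `n₀ n₁ n₂` inscribed
in the unit sphere, the ratios agree, since three distinct points of a sphere are not collinear. -/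
lemma ratio_eq {n₀ n₁ n₂ x₀ x₁ x₂ : E3} {a b e : ℝ} (h₀ : ‖n₀‖ = 1) (h₁ : ‖n₁‖ = 1) (h₂ : ‖n₂‖ = 1)
    (h01 : n₀ ≠ n₁) (h02 : n₀ ≠ n₂) (h12 : n₁ ≠ n₂) (ha : x₀ - x₁ = a • (n₀ - n₁))
    (hb : x₁ - x₂ = b • (n₁ - n₂)) (he : x₀ - x₂ = e • (n₀ - n₂)) : a = e := by
  set p := n₁ - n₀ with hp
  set q := n₂ - n₀ with hq
  have hp0 : p ≠ 0 := sub_ne_zero.2 h01.symm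
  have hq0 : q ≠ 0 := sub_ne_zero.2 h02.symm
  have hpq : p ≠ q := fun h => h12 (sub_left_injective h)
  have hlin : (e - b) • q = (a - b) • p := by
    have h : e • (n₀ - n₂) = a • (n₀ - n₁) + b • (n₁ - n₂) := by
      rw [← ha, ← hb, ← he]
      abel
    rw [← sub_eq_zero] at h ⊢
    rw [← neg_eq_zero, ← h, hp, hq]
    module
  by_cases hab : a = b
  · rw [hab, sub_self, zero_smul] at hlin
    rcases smul_eq_zero.1 hlin with h | h
    · linarith
    · exact absurd h hq0
  exfalso
  have hab' : a - b ≠ 0 := sub_ne_zero.2 hab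
  obtain ⟨t, ht⟩ : ∃ t : ℝ, p = t • q := by
    refine ⟨(a - b)⁻¹ * (e - b), ?_⟩
    rw [mul_smul, hlin, smul_smul, inv_mul_cancel₀ hab', one_smul]
  have e1 : n₁ = n₀ + t • q := by rw [← ht, hp]; abel
  have e2 : n₂ = n₀ + q := by rw [hq]; abel
  have f1 : ‖n₁‖ ^ 2 = 1 + 2 * (t * ⟪n₀, q⟫) + t ^ 2 * ‖q‖ ^ 2 := by
    rw [e1, norm_add_sq_real, h₀, inner_smul_right, norm_smul, mul_pow, Real.norm_eq_abs, sq_abs]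
    ring
  have f2 : ‖n₂‖ ^ 2 = 1 + 2 * ⟪n₀, q⟫ + ‖q‖ ^ 2 := by
    rw [e2, norm_add_sq_real, h₀]
    ring
  rw [h₁] at f1
  rw [h₂] at f2
  have f3 : t * (t - 1) * ‖q‖ ^ 2 = 0 := by linear_combination t * f2 - f1
  have hqn : ‖q‖ ^ 2 ≠ 0 := pow_ne_zero 2 (norm_ne_zero_iff.2 hq0)
  rcases mul_eq_zero.1 f3 with h | h
  · rcases mul_eq_zero.1 h with h | h
    · exact hp0 (by rw [ht, h, zero_smul])
    · exact hpq (by rw [ht, sub_eq_zero.1 h, one_smul])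
  · exact hqn h

/-- If short chords of the unit sphere are mapped to parallel vectors by `X`, then `X` is of the form
`n ↦ c + s n`: this holds near each point because the ratios in a small triangle agree, and the
pair `(s, c)` is locally constant on the connected sphere. -/
lemma exists_center {X : E3 → E3} {δ : ℝ} (hδ : 0 < δ)
    (hX : ∀ n₁ n₂ : E3, ‖n₁‖ = 1 → ‖n₂‖ = 1 → ‖n₁ - n₂‖ < δ →
      ∃ s : ℝ, X n₁ - X n₂ = s • (n₁ - n₂)) :
    ∃ (c : E3) (s : ℝ), ∀ n : E3, ‖n‖ = 1 → X n = c + s • n := by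
  have hloc : ∀ n₀ : sphere (0 : E3) 1, ∃ sc : ℝ × E3, ∀ n : E3, ‖n‖ = 1 →
      ‖n - n₀‖ < δ / 2 → X n = sc.2 + sc.1 • n := by
    rintro ⟨n₀, hn₀⟩
    have h₀ : ‖n₀‖ = 1 := by simpa using hn₀
    dsimp only
    by_cases hex : ∃ n₁ : E3, ‖n₁‖ = 1 ∧ ‖n₁ - n₀‖ < δ / 2 ∧ n₀ ≠ n₁
    · obtain ⟨n₁, h₁, hd₁, hne₁⟩ := hex
      have hd₁' : ‖n₀ - n₁‖ < δ / 2 := by rwa [norm_sub_rev]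
      obtain ⟨a, ha⟩ := hX n₀ n₁ h₀ h₁ (by linarith)
      refine ⟨(a, X n₀ - a • n₀), fun n hn hd => ?_⟩
      dsimp only
      by_cases hnn₀ : n₀ = n
      · subst hnn₀
        abel
      have key : X n₀ - X n = a • (n₀ - n) := by
        by_cases hnn₁ : n₁ = n
        · rw [← hnn₁]
          exact ha
        obtain ⟨e, he⟩ := hX n₀ n h₀ hn (by rw [norm_sub_rev]; linarith)
        obtain ⟨b, hb⟩ := hX n₁ n h₁ hn (by
          have h1 := norm_sub_le_norm_sub_add_norm_sub n₁ n₀ n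
          rw [norm_sub_rev n₀ n] at h1
          linarith)
        rw [ratio_eq h₀ h₁ hn hne₁ hnn₀ hnn₁ ha hb he]
        exact he
      rw [smul_sub] at key
      have : X n = X n₀ - (a • n₀ - a • n) := by
        rw [← key]
        abel
      rw [this]
      abel
    · refine ⟨(0, X n₀), fun n hn hd => ?_⟩
      have : n₀ = n := by
        by_contra h
        exact hex ⟨n, hn, hd, h⟩
      simp [this]
  choose F hF using hloc
  have hlc : IsLocallyConstant F := by
    rw [IsLocallyConstant.iff_eventually_eq]
    intro n₀
    filter_upwards [Metric.ball_mem_nhds n₀ (half_pos hδ)] with n hn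
    by_cases hne : n = n₀
    · rw [hne]
    have h₀ : ‖(n₀ : E3)‖ = 1 := by simp
    have h : ‖(n : E3)‖ = 1 := by simp
    have hd : ‖(n : E3) - n₀‖ < δ / 2 := by
      rw [← dist_eq_norm]
      exact hn
    have hd' : ‖(n₀ : E3) - n‖ < δ / 2 := by rwa [norm_sub_rev]
    have e1 := hF n n h (by simpa using half_pos hδ)
    have e2 := hF n n₀ h₀ hd'
    have e3 := hF n₀ n h hd
    have e4 := hF n₀ n₀ h₀ (by simpa using half_pos hδ)
    have e5 : ((F n).1 - (F n₀).1) • ((n : E3) - n₀) = 0 := by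
      have h1 : (F n).2 + (F n).1 • (n : E3) - ((F n).2 + (F n).1 • (n₀ : E3)) -
          ((F n₀).2 + (F n₀).1 • (n : E3) - ((F n₀).2 + (F n₀).1 • (n₀ : E3))) = 0 := by
        rw [← e1, ← e2, ← e3, ← e4, sub_self]
      refine Eq.trans ?_ h1
      module
    have hne' : (n : E3) - n₀ ≠ 0 := sub_ne_zero.2 fun h => hne (Subtype.ext h)
    have e6 : (F n).1 = (F n₀).1 := by
      rcases smul_eq_zero.1 e5 with h | h
      · exact sub_eq_zero.1 h
      · exact absurd h hne'
    refine Prod.ext e6 ?_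
    rw [e1, e6] at e3
    exact add_right_cancel e3
  have hpre : PreconnectedSpace (sphere (0 : E3) 1) := by
    rw [← isPreconnected_iff_preconnectedSpace]
    refine isPreconnected_sphere ?_ 0 1
    rw [← Module.finrank_eq_rank]
    simp
  obtain ⟨e, he, -, -⟩ := exists_unit_perp 0 0
  let n₀ : sphere (0 : E3) 1 := ⟨e, by simpa using he⟩
  refine ⟨(F n₀).2, (F n₀).1, fun n hn => ?_⟩
  let n' : sphere (0 : E3) 1 := ⟨n, by simpa using hn⟩
  rw [hlc.apply_eq_of_preconnectedSpace n₀ n']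
  exact hF n' n hn (by simpa [n'] using half_pos hδ)

lemma exists_unit_smul (v : E3) : ∃ e : E3, ‖e‖ = 1 ∧ v = ‖v‖ • e := by
  by_cases h0 : v = 0
  · obtain ⟨e, he, -, -⟩ := exists_unit_perp 0 0
    exact ⟨e, he, by simp [h0]⟩
  have hn : ‖v‖ ≠ 0 := norm_ne_zero_iff.2 h0
  exact ⟨‖v‖⁻¹ • v, by rw [norm_smul, norm_inv, norm_norm, inv_mul_cancel₀ hn],
    by rw [smul_smul, mul_inv_cancel₀ hn, one_smul]⟩

lemma closedBall_subset_of_sphere {S : Set E3} (hS : Convex ℝ S) {c : E3} {r : ℝ} (hr : 0 < r)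
    (h : ∀ v : E3, ‖v‖ = 1 → c + r • v ∈ S) : closedBall c r ⊆ S := by
  intro y hy
  rw [mem_closedBall_iff_norm] at hy
  obtain ⟨e, he, hye⟩ := exists_unit_smul (y - c)
  set t := ‖y - c‖
  have ht : 0 ≤ t := norm_nonneg _
  have h1 := hS (h e he) (h (-e) (by rwa [norm_neg])) (a := (1 + t / r) / 2) (b := (1 - t / r) / 2)
    (by positivity) (by
      have : t / r ≤ 1 := (div_le_one hr).2 hy
      linarith) (by ring)
  convert h1 using 1
  have h2 : y = c + t • e := by rw [← hye]; abel
  rw [h2]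
  have h3 : t = (t / r) * r := by field_simp
  nth_rewrite 1 [h3]
  module

lemma ball_of_isSupp {L : Set E3} (hLconv : Convex ℝ L) {c : E3} {s : ℝ} (hs : 0 < s)
    (h : ∀ n : E3, ‖n‖ = 1 → IsSupp L n (c + s • n)) : L = closedBall c s := by
  refine Set.Subset.antisymm (fun y hy => ?_)
    (closedBall_subset_of_sphere hLconv hs fun v hv => (h v hv).1)
  obtain ⟨e, he, hye⟩ := exists_unit_smul (y - c)
  have h1 := (h e he).2 y hy
  have h2 : y = c + ‖y - c‖ • e := by rw [← hye]; abel
  rw [h2, inner_add_right, inner_add_right, inner_smul_right, inner_smul_right,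
    real_inner_self_eq_norm_sq, he] at h1
  rw [mem_closedBall_iff_norm]
  linarith

/-- `K` is a ball: the discs of radius `1/2` tangent to the ball of radius `s` fill out the spheres
of radii between `s` and `√(s² + 1/4)`. -/
lemma ball_of_discs {K L : Set E3} (hKconv : Convex ℝ K) (hD : DiscSections K L) {c : E3} {s : ℝ}
    (hs : 0 < s) (h : ∀ n : E3, ‖n‖ = 1 → IsSupp L n (c + s • n)) :
    K = closedBall c (Real.sqrt (s ^ 2 + 1 / 4)) := by
  set R := Real.sqrt (s ^ 2 + 1 / 4) with hR
  have hR2 : R ^ 2 = s ^ 2 + 1 / 4 := Real.sq_sqrt (by positivity)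
  have hR0 : 0 < R := Real.sqrt_pos.2 (by positivity)
  have hcomb : ∀ (v f : E3) (α β : ℝ), ‖v‖ = 1 → ‖f‖ = 1 → ⟪v, f⟫ = 0 → α ^ 2 + β ^ 2 = 1 →
      ‖α • v + β • f‖ = 1 := by
    intro v f α β hv hf hvf hab
    have h1 : ‖α • v + β • f‖ ^ 2 = 1 := by
      rw [norm_add_sq_real, norm_smul, norm_smul, hv, hf, real_inner_smul_left, inner_smul_right,
        hvf, mul_one, mul_one, Real.norm_eq_abs, Real.norm_eq_abs, sq_abs, sq_abs]
      linarith
    nlinarith [norm_nonneg (α • v + β • f)]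
  refine Set.Subset.antisymm (fun p hp => ?_) (closedBall_subset_of_sphere hKconv hR0 fun v hv => ?_)
  · rw [mem_closedBall_iff_norm]
    obtain ⟨v, hv, hpv⟩ := exists_unit_smul (p - c)
    obtain ⟨f, hf, hvf, -⟩ := exists_unit_perp v v
    set ρ := ‖p - c‖
    have hpc : p = c + ρ • v := by rw [← hpv]; abel
    by_cases hρ : ρ ≤ s
    · nlinarith
    push Not at hρ
    have hρ0 : 0 < ρ := hs.trans hρ
    have hlt : s / ρ < 1 := (div_lt_one hρ0).2 hρ
    have hpos : 0 < s / ρ := div_pos hs hρ0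
    -- the plane tangent to the ball of radius `s` with unit normal `n` passes through `p`
    set β := Real.sqrt (1 - (s / ρ) ^ 2) with hβ
    have hβ2 : β ^ 2 = 1 - (s / ρ) ^ 2 := Real.sq_sqrt (by nlinarith)
    have hn := hcomb v f (s / ρ) β hv hf hvf (by linarith)
    set n := (s / ρ) • v + β • f with hn_def
    have hnv : ⟪n, v⟫ = s / ρ := by
      rw [hn_def, inner_add_left, real_inner_smul_left, real_inner_smul_left,
        real_inner_self_eq_norm_sq, hv, real_inner_comm, hvf]
      ring
    have hnn : ⟪n, n⟫ = 1 := by rw [real_inner_self_eq_norm_sq, hn, one_pow]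
    have h1 := (hD n _ hn (h n hn)).2 p hp (by
      rw [hpc, inner_add_right, inner_add_right, inner_smul_right, inner_smul_right, hnv, hnn]
      field_simp)
    have h2 : ‖p - (c + s • n)‖ ^ 2 = ρ ^ 2 - s ^ 2 := by
      rw [hpc, add_sub_add_left_eq_sub, norm_sub_sq_real, norm_smul, norm_smul, hv, hn,
        real_inner_smul_left, inner_smul_right, real_inner_comm, hnv, Real.norm_eq_abs,
        Real.norm_eq_abs, mul_one, mul_one, sq_abs, sq_abs]
      field_simp
      ring
    have h3 : ‖p - (c + s • n)‖ ^ 2 ≤ (1 / 2) ^ 2 := pow_le_pow_left₀ (norm_nonneg _) h1 2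
    refine (sq_le_sq₀ hρ0.le hR0.le).1 ?_
    linarith
  · obtain ⟨f, hf, hvf, -⟩ := exists_unit_perp v v
    have hab : (s / R) ^ 2 + (1 / (2 * R)) ^ 2 = 1 := by
      field_simp
      rw [hR2]
      ring
    have hn := hcomb v f (s / R) (1 / (2 * R)) hv hf hvf hab
    have hd := hcomb v f (1 / (2 * R)) (-(s / R)) hv hf hvf (by rw [neg_sq]; linarith)
    have h1 := (hD _ _ hn (h _ hn)).1 _ hd (by
      simp only [inner_add_left, inner_add_right, real_inner_smul_left, inner_smul_right, hvf,
        real_inner_comm v f, real_inner_self_eq_norm_sq, hv, hf]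
      ring)
    convert h1 using 1
    have h2 : R = s * (s / R) + 1 / 2 * (1 / (2 * R)) := by
      field_simp
      rw [hR2]
      ring
    nth_rewrite 1 [h2]
    module

/-- If for every unit vector `u` every chord of the projection `π_u(K)` whose line
supports `π_u(L)` has length `1`, then `K` and `L` are concentric balls. -/
theorem stmt_12 (K L : Set E3)
    (hKcpt : IsCompact K) (hKconv : Convex ℝ K) (hKint : (interior K).Nonempty)
    (hLcpt : IsCompact L) (hLconv : Convex ℝ L) (hLint : (interior L).Nonempty)
    (hLK : L ⊆ interior K)
    (hLstrict : ∀ p q : E3, p ∈ frontier L → q ∈ frontier L →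
      segment ℝ p q ⊆ frontier L → p = q)
    (hchord : ∀ u : E3, ‖u‖ = 1 → ∀ a d : E3, ⟪a, u⟫ = 0 → ⟪d, u⟫ = 0 → ‖d‖ = 1 →
      (lineThrough a d ∩ (proj u '' L)).Nonempty →
      lineThrough a d ∩ intrinsicInterior ℝ (proj u '' L) = ∅ →
      Metric.diam ((proj u '' K) ∩ lineThrough a d) = 1) :
    ∃ (c : E3) (r s : ℝ), K = Metric.closedBall c r ∧ L = Metric.closedBall c s := by
  have hLK' : L ⊆ K := hLK.trans interior_subset
  have hS : ConstWidthSections K L := constWidthSections_of_chord hKcpt hLint hLK' hchord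
  have hD : DiscSections K L := fun w x hw hx =>
    section_disc hKcpt hKconv hLcpt hLint hLK' hS hw hx
  choose X hX using exists_isSupp hLcpt (hLint.mono interior_subset)
  obtain ⟨δ, hδ, hunif⟩ := exists_uniform hLcpt hD (ε := 1 / 4) (by norm_num)
  obtain ⟨c, s, hcs⟩ := exists_center (X := X) (lt_min hδ one_pos) fun n₁ n₂ h₁ h₂ hlt =>
    sub_eq_smul_of_close hKconv hD h₁ h₂ (hX n₁) (hX n₂) (hlt.trans_le (min_le_right _ _))
      (hunif n₁ n₂ _ _ h₁ h₂ (hX n₁) (hX n₂) (hlt.trans_le (min_le_left _ _)))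
  have hsupp : ∀ n : E3, ‖n‖ = 1 → IsSupp L n (c + s • n) := fun n hn => hcs n hn ▸ hX n
  -- the width `2 s` of `L` is positive
  have hs : 0 < s := by
    obtain ⟨e, he, -, -⟩ := exists_unit_perp 0 0
    obtain ⟨y, hy, hlt⟩ := (hsupp e he).exists_lt hLint he
    have h := (hsupp (-e) (by rwa [norm_neg])).2 y hy
    have hee : ⟪e, e⟫ = 1 := by rw [real_inner_self_eq_norm_sq, he, one_pow]
    simp only [inner_neg_left, inner_add_right, inner_smul_right, inner_neg_right, hee] at h hlt
    linarith
  exact ⟨c, _, s, ball_of_discs hKconv hD hs hsupp, ball_of_isSupp hLconv hs hsupp⟩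
end
end

section
/- Let K and L be convex bodies in ℝ³ with L contained in the interior of K and L strictly convex. Suppose that for every unit vector u ∈ S², every chord of the orthogonal projection π_u(K) whose line supports π_u(L) has length 1. Then every 2-dimensional plane H that supports L intersects K in a planar convex set H ∩ K of constant width 1. -/
/-!
Let `H = {x | ⟪w, x⟫ = d}` support `L` and let `w'` be a unit direction parallel to `H`. Choose a
unit vector `u` orthogonal to `w` and `w'` (`exists_unit_normal`). As `H` is parallel to `u`, the
projection `π_u` maps `H` onto a line `ℓ` of direction `w'`, and `π_u(K) ∩ ℓ = π_u(K ∩ H)`. The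
orthogonal coordinate along `w'` identifies this chord isometrically with the image of `K ∩ H`
under `⟪·, w'⟫`, so the length of the chord is the width of `K ∩ H` in direction `w'`. Finally `ℓ`
supports `π_u(L)`: it meets `π_u(L)` because `H` meets `L`, and it misses the relative interior
(`inner_lt_of_mem_intrinsicInterior`) because `L` lies on one side of `H` and, having interior
points, is not contained in `H`. Hence the width equals `1`.
-/

open Metric Set
open scoped RealInnerProductSpace

noncomputable section

lemma inner_proj_of_orthogonal {u v : E3} (h : ⟪v, u⟫ = 0) (x : E3) : ⟪v, proj u x⟫ = ⟪v, x⟫ := by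
  simp [proj, inner_sub_right, inner_smul_right, h]

lemma inner_proj_self {u : E3} (hu : ‖u‖ = 1) (x : E3) : ⟪u, proj u x⟫ = 0 := by
  simp [proj, inner_sub_right, inner_smul_right, hu, real_inner_comm]

/-- In dimension three, two orthogonal nonzero vectors have a unit common normal `u`, and only `0`
is orthogonal to all three. -/
lemma exists_unit_normal {w w' : E3} (hw : w ≠ 0) (hw' : w' ≠ 0) (h : ⟪w', w⟫ = 0) :
    ∃ u : E3, ‖u‖ = 1 ∧ ⟪w, u⟫ = 0 ∧ ⟪w', u⟫ = 0 ∧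
      ∀ x : E3, ⟪w, x⟫ = 0 → ⟪w', x⟫ = 0 → ⟪u, x⟫ = 0 → x = 0 := by
  have hli : LinearIndependent ℝ ![w, w'] := by
    apply linearIndependent_of_ne_zero_of_inner_eq_zero (𝕜 := ℝ)
    · intro i; fin_cases i <;> simp [hw, hw']
    · intro i j hij
      fin_cases i <;> fin_cases j <;> simp_all [real_inner_comm]
  set S : Submodule ℝ E3 := Submodule.span ℝ (Set.range ![w, w']) with hS
  have h2 : Module.finrank ℝ S = 2 := by simpa using finrank_span_eq_card hli
  have h1 : Module.finrank ℝ Sᗮ = 1 := by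
    have := Submodule.finrank_add_finrank_orthogonal S
    have h3 : Module.finrank ℝ E3 = 3 := by simp
    omega
  have hmem : ∀ x : E3, x ∈ Sᗮ ↔ ⟪w, x⟫ = 0 ∧ ⟪w', x⟫ = 0 := by
    intro x
    rw [hS, Submodule.mem_orthogonal]
    constructor
    · intro hx
      exact ⟨hx w (Submodule.subset_span ⟨0, rfl⟩), hx w' (Submodule.subset_span ⟨1, rfl⟩)⟩
    · rintro ⟨hx, hx'⟩ v hv
      induction hv using Submodule.span_induction with
      | mem v hv =>
        obtain ⟨i, rfl⟩ := hv
        fin_cases i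
        · exact hx
        · exact hx'
      | zero => simp
      | add a b _ _ ha hb => simp [inner_add_left, ha, hb]
      | smul c a _ ha => simp [inner_smul_left, ha]
  have : Nontrivial Sᗮ := Module.nontrivial_of_finrank_pos (R := ℝ) (by omega)
  obtain ⟨u, hu⟩ := exists_norm_eq Sᗮ (zero_le_one (α := ℝ))
  have hu0 : u ≠ 0 := by rintro rfl; simp at hu
  obtain ⟨hu1, hu2⟩ := (hmem u).1 u.2
  have hun : ‖(u : E3)‖ = 1 := by simpa using hu
  refine ⟨u, hun, hu1, hu2, fun x hx hx' hxu => ?_⟩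
  obtain ⟨c, hc⟩ := (finrank_eq_one_iff_of_nonzero' u hu0).1 h1 ⟨x, (hmem x).2 ⟨hx, hx'⟩⟩
  have hc' : c • (u : E3) = x := congrArg Subtype.val hc
  rw [← hc', inner_smul_right, real_inner_self_eq_norm_sq, hun] at hxu
  rw [← hc', show c = 0 by simpa using hxu, zero_smul]

/-- A linear functional that is bounded by `d` on `A` and not constantly `d` on `A` stays below `d`
on the relative interior: otherwise the segment from a point of smaller value could be prolonged
inside `A` beyond its endpoint. -/
lemma inner_lt_of_mem_intrinsicInterior {A : Set E3} {w p q : E3} {d : ℝ}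
    (hA : ∀ y ∈ A, ⟪w, y⟫ ≤ d) (hq : q ∈ A) (hqd : ⟪w, q⟫ < d)
    (hp : p ∈ intrinsicInterior ℝ A) : ⟪w, p⟫ < d := by
  by_contra! hpd
  obtain ⟨⟨p', hp'⟩, hint, rfl⟩ := mem_intrinsicInterior.1 hp
  have hq' : q ∈ affineSpan ℝ A := subset_affineSpan ℝ A hq
  let f : ℝ → affineSpan ℝ A := fun t =>
    ⟨AffineMap.lineMap q p' t, AffineMap.lineMap_mem t hq' hp'⟩
  have hf : Continuous f := by
    apply Continuous.subtype_mk
    exact AffineMap.lineMap_continuous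
  have hf1 : f 1 = ⟨p', hp'⟩ := by simp [f]
  have hnear : ∀ᶠ t in nhds (1 : ℝ), f t ∈ ((↑) ⁻¹' A : Set (affineSpan ℝ A)) :=
    hf.continuousAt.eventually (by rw [hf1]; exact mem_interior_iff_mem_nhds.1 hint)
  obtain ⟨ε, hε, hball⟩ := Metric.eventually_nhds_iff.1 hnear
  have hmem : f (1 + ε / 2) ∈ ((↑) ⁻¹' A : Set (affineSpan ℝ A)) := by
    apply hball
    rw [Real.dist_eq, add_sub_cancel_left, abs_of_pos (by positivity)]
    linarith
  have hle := hA _ hmem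
  simp only [f, AffineMap.lineMap_apply, vsub_eq_sub, vadd_eq_add, inner_add_right,
    inner_smul_right, inner_sub_right] at hle
  simp only at hpd
  nlinarith [mul_pos hε (sub_pos.2 (hqd.trans_le hpd))]

lemma exists_inner_lt {L : Set E3} (hLint : (interior L).Nonempty) {w : E3} (hw : w ≠ 0) {d : ℝ}
    (hL : ∀ y ∈ L, ⟪w, y⟫ ≤ d) : ∃ z ∈ L, ⟪w, z⟫ < d := by
  obtain ⟨z, hz⟩ := hLint
  have hf : Continuous fun t : ℝ => z + t • w := by fun_prop
  have hnear : ∀ᶠ t in nhds (0 : ℝ), z + t • w ∈ L :=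
    hf.continuousAt.eventually (by simpa using mem_interior_iff_mem_nhds.1 hz)
  obtain ⟨ε, hε, hball⟩ := Metric.eventually_nhds_iff.1 hnear
  have hmem : z + (ε / 2) • w ∈ L := by
    apply hball
    rw [Real.dist_eq, sub_zero, abs_of_pos (by positivity)]
    linarith
  have hle := hL _ hmem
  rw [inner_add_right, inner_smul_right, real_inner_self_eq_norm_sq] at hle
  have : 0 < ‖w‖ := norm_pos_iff.2 hw
  exact ⟨z, interior_subset hz, by nlinarith [mul_pos hε (pow_pos this 2)]⟩

/-- If for every unit vector `u` every chord of the projection `π_u(K)` whose line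
supports `π_u(L)` has length `1`, then every plane supporting `L` cuts `K` in a
section of constant width `1`. -/
theorem stmt_13 (K L : Set E3)
    (hKcpt : IsCompact K) (hKconv : Convex ℝ K) (hKint : (interior K).Nonempty)
    (hLcpt : IsCompact L) (hLconv : Convex ℝ L) (hLint : (interior L).Nonempty)
    (hLK : L ⊆ interior K)
    (hLstrict : ∀ p q : E3, p ∈ frontier L → q ∈ frontier L →
      segment ℝ p q ⊆ frontier L → p = q)
    (hchord : ∀ u : E3, ‖u‖ = 1 → ∀ a d : E3, ⟪a, u⟫ = 0 → ⟪d, u⟫ = 0 → ‖d‖ = 1 →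
      (lineThrough a d ∩ (proj u '' L)).Nonempty →
      lineThrough a d ∩ intrinsicInterior ℝ (proj u '' L) = ∅ →
      Metric.diam ((proj u '' K) ∩ lineThrough a d) = 1) :
    ∀ w : E3, ∀ d : ℝ, w ≠ 0 → PlaneSupports L w d →
      HasConstWidthIn (planeEq w d ∩ K) w 1 := by
  intro w d hw hsupp w' hw'1 hw'w
  obtain ⟨⟨y, hyH, hyL⟩, hLd⟩ := hsupp
  have hyd : ⟪w, y⟫ = d := hyH
  have hww' : ⟪w, w'⟫ = 0 := by rw [real_inner_comm]; exact hw'w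
  have hw'0 : w' ≠ 0 := by rintro rfl; simp at hw'1
  have hw'sq : ⟪w', w'⟫ = 1 := by rw [real_inner_self_eq_norm_sq, hw'1]; norm_num
  obtain ⟨u, hu, hwu, hw'u, hzero⟩ := exists_unit_normal hw hw'0 hw'w
  have huw' : ⟪u, w'⟫ = 0 := by rw [real_inner_comm]; exact hw'u
  have huw : ⟪u, w⟫ = 0 := by rw [real_inner_comm]; exact hwu
  -- The foot of the perpendicular from the origin to the plane; it lies on the projected line.
  set a : E3 := (d / ‖w‖ ^ 2) • w with ha
  have hwa : ⟪w, a⟫ = d := by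
    have : ‖w‖ ≠ 0 := norm_ne_zero_iff.2 hw
    rw [ha, inner_smul_right, real_inner_self_eq_norm_sq]
    field_simp
  have hw'a : ⟪w', a⟫ = 0 := by rw [ha, inner_smul_right, hw'w, mul_zero]
  have hua : ⟪u, a⟫ = 0 := by rw [ha, inner_smul_right, huw, mul_zero]
  clear_value a
  have hline : ∀ x ∈ lineThrough a w', ⟪w, x⟫ = d := by
    rintro x ⟨t, rfl⟩
    rw [inner_add_right, inner_smul_right, hwa, hww', mul_zero, add_zero]
  have hprojH : ∀ x : E3, ⟪w, x⟫ = d → proj u x = a + ⟪x, w'⟫ • w' := by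
    intro x hx
    rw [← sub_eq_zero]
    apply hzero
    · rw [inner_sub_right, inner_proj_of_orthogonal hwu, inner_add_right, inner_smul_right, hwa,
        hww', hx]
      ring
    · rw [inner_sub_right, inner_proj_of_orthogonal hw'u, inner_add_right, inner_smul_right, hw'a,
        hw'sq, real_inner_comm]
      ring
    · rw [inner_sub_right, inner_proj_self hu, inner_add_right, inner_smul_right, hua, huw']
      ring
  have hdiam := hchord u hu a w' (by rw [real_inner_comm]; exact hua) hw'u hw'1
    ⟨proj u y, ⟨_, hprojH y hyd⟩, y, hyL, rfl⟩ (by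
      rw [Set.eq_empty_iff_forall_notMem]
      rintro p ⟨hpl, hpi⟩
      obtain ⟨z, hzL, hzd⟩ := exists_inner_lt hLint hw hLd
      refine (inner_lt_of_mem_intrinsicInterior (A := proj u '' L) (w := w) (d := d) (q := proj u z)
        ?_ ⟨z, hzL, rfl⟩ ?_ hpi).ne (hline p hpl)
      · rintro _ ⟨v, hv, rfl⟩
        rw [inner_proj_of_orthogonal hwu]
        exact hLd v hv
      · rwa [inner_proj_of_orthogonal hwu])
  have hchordEq : (proj u '' K) ∩ lineThrough a w' =
      (fun t : ℝ => a + t • w') '' ((fun x => ⟪x, w'⟫) '' (planeEq w d ∩ K)) := by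
    ext x
    constructor
    · rintro ⟨⟨k, hk, rfl⟩, hl⟩
      have hkd : ⟪w, k⟫ = d := by
        rw [← inner_proj_of_orthogonal hwu]
        exact hline _ hl
      exact ⟨_, ⟨k, ⟨hkd, hk⟩, rfl⟩, (hprojH k hkd).symm⟩
    · rintro ⟨_, ⟨k, ⟨hkd, hk⟩, rfl⟩, rfl⟩
      exact ⟨⟨k, hk, hprojH k hkd⟩, _, rfl⟩
  have hiso : Isometry fun t : ℝ => a + t • w' := by
    apply Isometry.of_dist_eq
    intro s t
    rw [dist_add_left, dist_eq_norm, ← sub_smul, norm_smul, hw'1, mul_one, Real.dist_eq,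
      Real.norm_eq_abs]
  have hbdd : Bornology.IsBounded ((fun x => ⟪x, w'⟫) '' (planeEq w d ∩ K)) :=
    (hKcpt.image (f := fun x : E3 => ⟪x, w'⟫) (by fun_prop)).isBounded.subset
      (Set.image_mono Set.inter_subset_right)
  rw [widthIn, ← Real.diam_eq hbdd, ← hiso.diam_image, ← hchordEq, hdiam]
end
end

section
/- Let K ⊂ ℝ³ be a strictly convex body and let p be an equichordal point of K. Suppose that for every unit vector u ∈ S², the point π_u(p) is an equichordal point of the projection π_u(K). Then K is a body of revolution; that is, there exists a line ℓ such that every rotation of ℝ³ about ℓ maps K onto itself. -/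
/-!
Let `g` be the gauge of `K - p`; the radial function of `K` at `p` is `1 / g` on the unit sphere, and
`1 / g x + 1 / g (-x) = c / ‖x‖` by the equichordal property. Since `g` and `g (-·)` are both convex,
this identity forces `g` to be differentiable away from `0` (`IsEquiGauge.differentiableAt`): `K` is
smooth. A direction `u` is tangent to `K` at the boundary point in direction `d` exactly when the
derivative of `g` at `d` kills `u` (`IsEquiGauge.touches_iff`).

For orthogonal unit vectors `u, d`, the chord of `π_u(K)` through `π_u(p)` in direction `d` has
length at least `c`, because it covers the chord of `K` in direction `d`, and equality holds exactly
when `u` is tangent to `K` at both ends of that chord. As the chords of `π_u(K)` all have the same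
length, tangency of `u` at both ends of a single chord of `K` orthogonal to `u` implies tangency at
the ends of all of them (`IsEquiGauge.shadow_of_fderiv`). Call such `u` shadow directions.

Every plane through `p` contains a shadow direction: on the unit circle of the plane `g` has a
critical point `d`, then `-d` is critical as well, and the direction orthogonal to `d` is tangent at
both ends (`IsEquiGauge.exists_shadow`). Hence there are two orthogonal shadow directions `u, v`. If
`e` is orthogonal to both, the tangent planes at the two ends of the chord in direction `e` are
orthogonal to `e`, so every direction in the plane of `u, v` is a shadow direction
(`IsEquiGauge.exists_axis`). In particular the derivative of `g` along each circle about the axis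
`p + ℝ e` vanishes, so `g` is invariant under rotations about this axis.
-/

open Metric Set
open scoped RealInnerProductSpace

noncomputable section

/-- `g` is the gauge of `K` seen from `p`: a positive sublinear function whose unit sublevel set is
`K - p`. The radial function of `K` at `p` is `v ↦ (g v)⁻¹`, so `equi` says that `p` is an
equichordal point of `K` with chord length `c`. -/
structure IsEquiGauge (K : Set E3) (p : E3) (c : ℝ) (g : E3 → ℝ) : Prop where
  add_le : ∀ x y, g (x + y) ≤ g x + g y
  smul : ∀ t : ℝ, 0 ≤ t → ∀ x, g (t • x) = t * g x
  pos : ∀ x, x ≠ 0 → 0 < g x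
  mem : ∀ x, p + x ∈ K ↔ g x ≤ 1
  equi : ∀ x, ‖x‖ = 1 → (g x)⁻¹ + (g (-x))⁻¹ = c

/-- The line through the boundary point of `K` in direction `d` (as seen from `p`), parallel
to `u`, misses the interior of `K`. -/
def Touches (g : E3 → ℝ) (d u : E3) : Prop := ∀ t : ℝ, g d ≤ g (d + t • u)

namespace IsEquiGauge

variable {K : Set E3} {p : E3} {c : ℝ} {g : E3 → ℝ}

lemma map_zero (h : IsEquiGauge K p c g) : g 0 = 0 := by
  simpa using h.smul 0 le_rfl 0

lemma nonneg (h : IsEquiGauge K p c g) (x : E3) : 0 ≤ g x := by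
  by_cases hx : x = 0
  · simp [hx, h.map_zero]
  · exact (h.pos x hx).le

lemma equi' (h : IsEquiGauge K p c g) (x : E3) (hx : x ≠ 0) :
    (g x)⁻¹ + (g (-x))⁻¹ = c / ‖x‖ := by
  have hn : 0 < ‖x‖ := norm_pos_iff.2 hx
  have h1 := h.equi (‖x‖⁻¹ • x) (by rw [norm_smul, norm_inv, norm_norm, inv_mul_cancel₀ hn.ne'])
  rw [← smul_neg, h.smul _ (inv_nonneg.2 hn.le), h.smul _ (inv_nonneg.2 hn.le),
    mul_inv, mul_inv, inv_inv, ← mul_add] at h1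
  rw [← h1]
  field_simp

/-! ### Smoothness of the gauge -/

/-- Hahn–Banach: a supporting functional of the gauge. -/
lemma exists_support (h : IsEquiGauge K p c g) (x : E3) (hx : x ≠ 0) :
    ∃ φ : E3 →L[ℝ] ℝ, φ x = g x ∧ ∀ y, φ y ≤ g y := by
  obtain ⟨φ, h1, h2⟩ := exists_extension_of_le_sublinear
    (LinearPMap.mkSpanSingleton x (g x) hx : E3 →ₗ.[ℝ] ℝ) g
    (fun t ht x => h.smul t ht.le x) h.add_le (by
      rintro ⟨y, hy⟩
      obtain ⟨t, rfl⟩ := Submodule.mem_span_singleton.1 hy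
      rw [LinearPMap.mkSpanSingleton'_apply]
      simp only [smul_eq_mul, RingHom.id_apply]
      rcases le_total 0 t with ht | ht
      · rw [h.smul t ht]
      · exact (mul_nonpos_of_nonpos_of_nonneg ht (h.nonneg x)).trans (h.nonneg _))
  refine ⟨LinearMap.toContinuousLinearMap φ, ?_, h2⟩
  have := h1 ⟨x, Submodule.mem_span_singleton_self x⟩
  rw [LinearPMap.mkSpanSingleton_apply] at this
  exact this

/-- A function squeezed between two differentiable functions that touch it at `x` is
differentiable at `x`. -/
lemma _root_.differentiableAt_of_squeeze {f l U : E3 → ℝ} {x : E3}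
    (hl : DifferentiableAt ℝ l x) (hU : DifferentiableAt ℝ U x)
    (hlx : l x = f x) (hUx : U x = f x)
    (h1 : ∀ᶠ y in nhds x, l y ≤ f y) (h2 : ∀ᶠ y in nhds x, f y ≤ U y) :
    DifferentiableAt ℝ f x := by
  have hmin : IsLocalMin (fun y => U y - l y) x := by
    filter_upwards [h1, h2] with y h1 h2
    linarith
  have hz := hmin.hasFDerivAt_eq_zero (hU.hasFDerivAt.sub hl.hasFDerivAt)
  have heq : fderiv ℝ U x = fderiv ℝ l x := sub_eq_zero.1 hz
  have hU' := hU.hasFDerivAt.isLittleO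
  have hl' := hl.hasFDerivAt.isLittleO
  rw [heq] at hU'
  refine (HasFDerivAt.of_isLittleO (f' := fderiv ℝ l x) ?_).differentiableAt
  refine Asymptotics.IsBigO.trans_isLittleO ?_ (hU'.norm_left.add hl'.norm_left)
  refine Asymptotics.IsBigO.of_bound 1 ?_
  filter_upwards [h1, h2] with y h1 h2
  rw [hUx, hlx, one_mul]
  simp only [Real.norm_eq_abs]
  refine le_trans ?_ (le_abs_self _)
  refine abs_le.2 ⟨?_, ?_⟩
  · linarith [neg_abs_le (l y - f x - (fderiv ℝ l x) (y - x)),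
      abs_nonneg (U y - f x - (fderiv ℝ l x) (y - x))]
  · linarith [le_abs_self (U y - f x - (fderiv ℝ l x) (y - x)),
      abs_nonneg (l y - f x - (fderiv ℝ l x) (y - x))]

/-- The equichordal condition makes `K` smooth: a kink of the convex function `g` at `x` would
have to be matched by a concave kink at `-x`. -/
lemma differentiableAt (h : IsEquiGauge K p c g) (x : E3) (hx : x ≠ 0) :
    DifferentiableAt ℝ g x := by
  obtain ⟨φ, hφx, hφ⟩ := h.exists_support x hx
  obtain ⟨ψ, hψx, hψ⟩ := h.exists_support (-x) (neg_ne_zero.2 hx)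
  have hψpos : 0 < ψ (-x) := hψx ▸ h.pos _ (neg_ne_zero.2 hx)
  have hq : c / ‖x‖ - (ψ (-x))⁻¹ = (g x)⁻¹ := by
    rw [hψx, ← h.equi' x hx]; ring
  have hqpos : 0 < c / ‖x‖ - (ψ (-x))⁻¹ := hq ▸ inv_pos.2 (h.pos x hx)
  have hd : DifferentiableAt ℝ (fun y => c / ‖y‖ - (ψ (-y))⁻¹) x := by
    refine DifferentiableAt.sub ?_ ?_
    · simp only [div_eq_mul_inv]
      exact (((contDiffAt_norm ℝ hx).differentiableAt (n := 1) (by simp)).inv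
        (norm_ne_zero_iff.2 hx)).const_mul c
    · exact DifferentiableAt.inv (by fun_prop) hψpos.ne'
  refine differentiableAt_of_squeeze (l := φ) (U := fun y => (c / ‖y‖ - (ψ (-y))⁻¹)⁻¹)
    φ.differentiableAt (hd.inv hqpos.ne') hφx (by rw [hq, inv_inv])
    (Filter.Eventually.of_forall hφ) ?_
  have e1 : ∀ᶠ y in nhds x, 0 < ψ (-y) :=
    ContinuousAt.eventually_lt (f := fun _ => (0:ℝ)) (g := fun y => ψ (-y)) (by fun_prop) (by fun_prop) hψpos
  have e2 : ∀ᶠ y in nhds x, 0 < c / ‖y‖ - (ψ (-y))⁻¹ :=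
    ContinuousAt.eventually_lt (f := fun _ => (0:ℝ)) (by fun_prop) hd.continuousAt hqpos
  filter_upwards [e1, e2, isOpen_ne.mem_nhds hx] with y h1 h2 h3
  rw [le_inv_comm₀ (h.pos y h3) h2, ← h.equi' y h3]
  have : (g (-y))⁻¹ ≤ (ψ (-y))⁻¹ := inv_anti₀ h1 (hψ _)
  linarith

lemma fderiv_le (h : IsEquiGauge K p c g) (x : E3) (hx : x ≠ 0) (y : E3) :
    g x + fderiv ℝ g x y ≤ g (x + y) := by
  obtain ⟨φ, hφx, hφ⟩ := h.exists_support x hx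
  have hmin : IsLocalMin (fun y => g y - φ y) x := by
    refine Filter.Eventually.of_forall fun y => ?_
    have := hφ y
    simp only [hφx]
    linarith
  have hz := hmin.hasFDerivAt_eq_zero ((h.differentiableAt x hx).hasFDerivAt.sub φ.hasFDerivAt)
  rw [sub_eq_zero.1 hz, ← hφx, ← map_add]
  exact hφ _

lemma touches_iff (h : IsEquiGauge K p c g) (x : E3) (hx : x ≠ 0) (u : E3) :
    Touches g x u ↔ fderiv ℝ g x u = 0 := by
  constructor
  · intro ht
    have hc : HasDerivAt (fun t : ℝ => x + t • u) u 0 := by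
      simpa using ((hasDerivAt_id (0:ℝ)).smul_const u).const_add x
    have hd : HasDerivAt (fun t : ℝ => g (x + t • u)) (fderiv ℝ g x u) 0 := by
      refine HasFDerivAt.comp_hasDerivAt (l := g) (f := fun t : ℝ => x + t • u) 0 ?_ hc
      simpa using (h.differentiableAt x hx).hasFDerivAt
    refine IsLocalMin.hasDerivAt_eq_zero (Filter.Eventually.of_forall fun t => ?_) hd
    simpa using ht t
  · intro h0 t
    simpa [h0] using h.fderiv_le x hx (t • u)

/-! ### Chords of the projections -/

/-- The positions, along direction `d`, of the points of `π_u(K)` on the line through `π_u(p)`. -/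
def chord (g : E3 → ℝ) (d u : E3) : Set ℝ := {t | ∃ s : ℝ, g (t • d + s • u) ≤ 1}

lemma proj_inter (h : IsEquiGauge K p c g) {d u : E3} (hu : ‖u‖ = 1)
    (hdu : ⟪d, u⟫ = 0) :
    (proj u '' K) ∩ lineThrough (proj u p) d = (fun t : ℝ => proj u p + t • d) '' chord g d u := by
  have huu : ⟪u, u⟫ = 1 := by rw [real_inner_self_eq_norm_sq, hu]; norm_num
  ext z
  constructor
  · rintro ⟨⟨x, hx, rfl⟩, t, ht⟩
    refine ⟨t, ⟨⟪x - p, u⟫, ?_⟩, ht.symm⟩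
    rw [← h.mem]
    convert hx using 1
    simp only [proj] at ht
    rw [inner_sub_left, sub_smul]
    have hxe : x = p - ⟪p, u⟫ • u + t • d + ⟪x, u⟫ • u := sub_eq_iff_eq_add.1 ht
    conv_rhs => rw [hxe]
    abel
  · rintro ⟨t, ⟨s, hs⟩, rfl⟩
    refine ⟨⟨_, (h.mem _).2 hs, ?_⟩, t, rfl⟩
    simp only [proj, inner_add_left, real_inner_smul_left, huu, hdu]
    simp only [mul_zero, mul_one, zero_add, add_smul]
    abel

lemma isometry_line (a : E3) {d : E3} (hd : ‖d‖ = 1) : Isometry (fun t : ℝ => a + t • d) := by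
  refine Isometry.of_dist_eq fun s t => ?_
  rw [dist_add_left, dist_eq_norm, ← sub_smul, norm_smul, hd, mul_one, Real.dist_eq,
    Real.norm_eq_abs]

lemma diam_proj (h : IsEquiGauge K p c g) {d u : E3} (hd : ‖d‖ = 1) (hu : ‖u‖ = 1)
    (hdu : ⟪d, u⟫ = 0) :
    Metric.diam ((proj u '' K) ∩ lineThrough (proj u p) d) = Metric.diam (chord g d u) := by
  rw [h.proj_inter hu hdu, (isometry_line _ hd).diam_image]

lemma le_of_touches (h : IsEquiGauge K p c g) {d u : E3} (hd : d ≠ 0) (ht : Touches g d u)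
    {t s : ℝ} (hs : g (t • d + s • u) ≤ 1) : t ≤ (g d)⁻¹ := by
  have hg := h.pos d hd
  rcases le_or_gt t 0 with h0 | h0
  · exact h0.trans (inv_pos.2 hg).le
  · have e : t • d + s • u = t • (d + (s / t) • u) := by
      rw [smul_add, smul_smul, mul_div_cancel₀ _ h0.ne']
    rw [e, h.smul t h0.le] at hs
    rw [le_inv_comm₀ h0 hg, ← one_div, le_div_iff₀ h0]
    nlinarith [ht (s / t)]

lemma inv_mem_chord (h : IsEquiGauge K p c g) {d u : E3} (t : ℝ)
    (hne : d + t • u ≠ 0) : (g (d + t • u))⁻¹ ∈ chord g d u := by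
  have hg := h.pos _ hne
  refine ⟨(g (d + t • u))⁻¹ * t, ?_⟩
  rw [mul_smul, ← smul_add, h.smul _ (inv_pos.2 hg).le, inv_mul_cancel₀ hg.ne']

lemma neg_inv_mem_chord (h : IsEquiGauge K p c g) {d u : E3} (hd : d ≠ 0) :
    -(g (-d))⁻¹ ∈ chord g d u := by
  have hg := h.pos _ (neg_ne_zero.2 hd)
  refine ⟨0, ?_⟩
  rw [zero_smul, add_zero, neg_smul, ← smul_neg, h.smul _ (inv_pos.2 hg).le, inv_mul_cancel₀ hg.ne']

lemma diam_chord_of_touches (h : IsEquiGauge K p c g) {d u : E3} (hd : ‖d‖ = 1)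
    (h1 : Touches g d u) (h2 : Touches g (-d) u) : Metric.diam (chord g d u) = c := by
  have hd0 : d ≠ 0 := by rintro rfl; simp at hd
  have hsub : chord g d u ⊆ Icc (-(g (-d))⁻¹) (g d)⁻¹ := by
    rintro t ⟨s, hs⟩
    refine ⟨?_, h.le_of_touches hd0 h1 hs⟩
    have := h.le_of_touches (t := -t) (s := s) (neg_ne_zero.2 hd0) h2 (by simpa using hs)
    linarith
  have hle : -(g (-d))⁻¹ ≤ (g d)⁻¹ := by
    have := h.nonneg d
    have := h.nonneg (-d)
    have : 0 ≤ (g (-d))⁻¹ := by positivity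
    have : 0 ≤ (g d)⁻¹ := by positivity
    linarith
  have hlen : (g d)⁻¹ - -(g (-d))⁻¹ = c := by rw [sub_neg_eq_add, h.equi d hd]
  apply le_antisymm
  · rw [← hlen, ← Real.diam_Icc hle]
    exact Metric.diam_mono hsub (isBounded_Icc _ _)
  · have m1 : (g d)⁻¹ ∈ chord g d u := by
      simpa using h.inv_mem_chord (d := d) (u := u) 0 (by simpa using hd0)
    have := Metric.dist_le_diam_of_mem ((isBounded_Icc _ _).subset hsub) m1 (h.neg_inv_mem_chord hd0)
    rw [Real.dist_eq, hlen] at this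
    exact (le_abs_self c).trans this

lemma touches_of_diam_chord (h : IsEquiGauge K p c g) {d u : E3} (hd : ‖d‖ = 1)
    (hu : ‖u‖ = 1) (hdu : ⟪d, u⟫ = 0) (hb : Bornology.IsBounded K)
    (hc : Metric.diam (chord g d u) = c) : Touches g d u := by
  have hd0 : d ≠ 0 := by rintro rfl; simp at hd
  have hbd : Bornology.IsBounded (chord g d u) := by
    have hpc : Continuous (proj u) := by unfold proj; fun_prop
    have h2 : Bornology.IsBounded ((proj u '' K) ∩ lineThrough (proj u p) d) := by
      refine Bornology.IsBounded.subset ?_ inter_subset_left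
      have : IsCompact (proj u '' closure K) := hb.isCompact_closure.image hpc
      exact this.isBounded.subset (image_mono subset_closure)
    rw [h.proj_inter hu hdu] at h2
    have h3 := (isometry_line (proj u p) hd).antilipschitz.isBounded_preimage h2
    exact h3.subset (subset_preimage_image _ _)
  intro t
  by_contra! hlt
  have hne : d + t • u ≠ 0 := by
    intro h0
    have h3 : ⟪d + t • u, d⟫ = 1 := by
      rw [inner_add_left, real_inner_smul_left, real_inner_comm, real_inner_comm d u, hdu,
        real_inner_self_eq_norm_sq, hd]
      norm_num
    rw [h0, inner_zero_left] at h3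
    norm_num at h3
  have := Metric.dist_le_diam_of_mem hbd (h.inv_mem_chord t hne) (h.neg_inv_mem_chord hd0)
  rw [hc, Real.dist_eq, ← h.equi d hd] at this
  have h4 : (g d)⁻¹ < (g (d + t • u))⁻¹ := inv_strictAnti₀ (h.pos _ hne) hlt
  have := le_abs_self ((g (d + t • u))⁻¹ - -(g (-d))⁻¹)
  linarith

/-! ### Directions whose shadow boundary is a central section -/

/-- The direction `u` is tangent to `K` at every boundary point of the section of `K` by `p + u^⊥`;
that is, the shadow boundary of `K` in direction `u` contains the boundary of this section. -/
def _root_.Shadow (g : E3 → ℝ) (u : E3) : Prop :=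
  ∀ d : E3, d ≠ 0 → ⟪d, u⟫ = 0 → fderiv ℝ g d u = 0

/-- If `u` is tangent to `K` at both ends of a single chord orthogonal to `u`, the corresponding
chord of `π_u(K)` has length `c`; then all chords of `π_u(K)` through `π_u(p)` have length `c`,
which makes `u` tangent to `K` at the ends of all chords orthogonal to `u`. -/
lemma shadow_of_fderiv (h : IsEquiGauge K p c g) (hb : Bornology.IsBounded K)
    (hproj : ∀ u : E3, ‖u‖ = 1 → ∃ cu : ℝ, ∀ d : E3, ‖d‖ = 1 → ⟪d, u⟫ = 0 →
      Metric.diam ((proj u '' K) ∩ lineThrough (proj u p) d) = cu)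
    {d u : E3} (hd : ‖d‖ = 1) (hu : ‖u‖ = 1) (hdu : ⟪d, u⟫ = 0)
    (h1 : fderiv ℝ g d u = 0) (h2 : fderiv ℝ g (-d) u = 0) : Shadow g u := by
  have hd0 : d ≠ 0 := by rintro rfl; simp at hd
  obtain ⟨cu, hcu⟩ := hproj u hu
  have hcc : cu = c := by
    rw [← hcu d hd hdu, h.diam_proj hd hu hdu]
    exact h.diam_chord_of_touches hd ((h.touches_iff d hd0 u).2 h1)
      ((h.touches_iff (-d) (neg_ne_zero.2 hd0) u).2 h2)
  intro x hx hxu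
  have hn : 0 < ‖x‖ := norm_pos_iff.2 hx
  have hy : ‖‖x‖⁻¹ • x‖ = 1 := by rw [norm_smul, norm_inv, norm_norm, inv_mul_cancel₀ hn.ne']
  have hyu : ⟪‖x‖⁻¹ • x, u⟫ = 0 := by rw [real_inner_smul_left, hxu, mul_zero]
  have hT : Touches g (‖x‖⁻¹ • x) u := by
    apply h.touches_of_diam_chord hy hu hyu hb
    rw [← h.diam_proj hy hu hyu, hcu _ hy hyu, hcc]
  rw [← h.touches_iff x hx]
  intro t
  have := hT (‖x‖⁻¹ * t)
  rw [mul_smul, ← smul_add, h.smul _ (inv_pos.2 hn).le, h.smul _ (inv_pos.2 hn).le] at this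
  exact le_of_mul_le_mul_left this (inv_pos.2 hn)

/-- Differentiating the equichordal identity along `u`, where `‖·‖` is stationary: tangency in an orthogonal
direction is inherited by the antipodal boundary point. -/
lemma fderiv_neg (h : IsEquiGauge K p c g) {d u : E3} (hd : d ≠ 0) (hdu : ⟪d, u⟫ = 0)
    (h1 : fderiv ℝ g d u = 0) : fderiv ℝ g (-d) u = 0 := by
  have hnd := neg_ne_zero.2 hd
  have hc : HasDerivAt (fun t : ℝ => d + t • u) u 0 := by
    simpa using ((hasDerivAt_id (0:ℝ)).smul_const u).const_add d
  have hn : HasDerivAt (fun t : ℝ => ‖d + t • u‖ ^ 2) 0 0 := by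
    have := hc.norm_sq
    simpa [hdu] using this
  have hf : HasDerivAt (fun t : ℝ => g (d + t • u)) 0 0 := by
    have h3 : HasFDerivAt g (fderiv ℝ g d) (d + (0 : ℝ) • u) := by
      simpa using (h.differentiableAt d hd).hasFDerivAt
    have h4 := h3.comp_hasDerivAt (0 : ℝ) hc
    rwa [h1] at h4
  have hf2 : HasDerivAt (fun t : ℝ => g (-(d + t • u))) (-(fderiv ℝ g (-d) u)) 0 := by
    rw [← map_neg]
    refine HasFDerivAt.comp_hasDerivAt (l := g) (f := fun t : ℝ => -(d + t • u)) 0 ?_ hc.neg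
    simpa using (h.differentiableAt (-d) hnd).hasFDerivAt
  have hg1 := h.pos d hd
  have hg2 := h.pos (-d) hnd
  have hn0 : 0 < ‖d‖ := norm_pos_iff.2 hd
  have hn1 : HasDerivAt (fun t : ℝ => ‖d + t • u‖) 0 0 := by
    have := hn.sqrt (by simpa using hd)
    simpa [Real.sqrt_sq] using this
  have hr : HasDerivAt (fun t : ℝ => c / ‖d + t • u‖) 0 0 := by
    have := (hn1.inv (by simpa using hd)).const_mul c
    simpa [div_eq_mul_inv] using this
  have hl := (hf.inv (by simpa using hg1.ne')).add (hf2.inv (by simpa using hg2.ne'))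
  have hev : (fun t : ℝ => c / ‖d + t • u‖) =ᶠ[nhds 0]
      ((fun t : ℝ => g (d + t • u))⁻¹ + (fun t : ℝ => g (-(d + t • u)))⁻¹) := by
    have : ∀ᶠ t in nhds (0:ℝ), d + t • u ≠ 0 :=
      hc.continuousAt.eventually_ne (by simpa using hd)
    filter_upwards [this] with t ht
    simp [← h.equi' _ ht]
  have := hr.unique (hl.congr_of_eventuallyEq hev)
  simp only [zero_smul, add_zero, neg_zero, zero_div, zero_add, neg_neg] at this
  have h5 := this.symm
  rw [div_eq_zero_iff] at h5
  rcases h5 with h5 | h5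
  · exact h5
  · exact absurd h5 (by positivity)

/-- Rolle's theorem for `g` on the unit circle of the plane of `a` and `b`: the plane contains a
direction with planar shadow boundary. -/
lemma exists_shadow (h : IsEquiGauge K p c g) (hb : Bornology.IsBounded K)
    (hproj : ∀ u : E3, ‖u‖ = 1 → ∃ cu : ℝ, ∀ d : E3, ‖d‖ = 1 → ⟪d, u⟫ = 0 →
      Metric.diam ((proj u '' K) ∩ lineThrough (proj u p) d) = cu)
    {a b : E3} (ha : ‖a‖ = 1) (hbn : ‖b‖ = 1) (hab : ⟪a, b⟫ = 0) :
    ∃ d u : E3, ‖d‖ = 1 ∧ ‖u‖ = 1 ∧ ⟪d, u⟫ = 0 ∧ Shadow g u ∧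
      ∀ e : E3, ⟪a, e⟫ = 0 → ⟪b, e⟫ = 0 → ⟪d, e⟫ = 0 ∧ ⟪u, e⟫ = 0 := by
  have hba : ⟪b, a⟫ = 0 := by rw [real_inner_comm]; exact hab
  have hin : ∀ x y z w : ℝ, ⟪x • a + y • b, z • a + w • b⟫ = x * z + y * w := by
    intro x y z w
    simp [inner_add_left, inner_add_right, real_inner_smul_left, real_inner_smul_right, hab, hba,
      ha, hbn, mul_comm]
  have hno : ∀ x y : ℝ, x ^ 2 + y ^ 2 = 1 → ‖x • a + y • b‖ = 1 := by
    intro x y hxy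
    have := hin x y x y
    rw [real_inner_self_eq_norm_sq] at this
    have h2 : ‖x • a + y • b‖ ^ 2 = 1 := by rw [this]; linarith
    exact (pow_eq_one_iff_of_nonneg (norm_nonneg _) two_ne_zero).1 h2
  have hd1 : ∀ θ : ℝ, ‖Real.cos θ • a + Real.sin θ • b‖ = 1 := fun θ =>
    hno _ _ (Real.cos_sq_add_sin_sq θ)
  have hd0 : ∀ θ : ℝ, Real.cos θ • a + Real.sin θ • b ≠ 0 := fun θ h0 => by
    have := hd1 θ
    rw [h0] at this
    simp at this
  have hder : ∀ θ : ℝ, HasDerivAt (fun θ : ℝ => g (Real.cos θ • a + Real.sin θ • b))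
      (fderiv ℝ g (Real.cos θ • a + Real.sin θ • b) ((-Real.sin θ) • a + Real.cos θ • b)) θ :=
    fun θ => (h.differentiableAt _ (hd0 θ)).hasFDerivAt.comp_hasDerivAt θ
      (((Real.hasDerivAt_cos θ).smul_const a).add ((Real.hasDerivAt_sin θ).smul_const b))
  obtain ⟨θ, -, hθ⟩ := exists_hasDerivAt_eq_zero (a := 0) (b := 2 * Real.pi) (by positivity)
    (fun θ _ => (hder θ).continuousAt.continuousWithinAt) (by simp) (fun θ _ => hder θ)
  have hu1 : ‖(-Real.sin θ) • a + Real.cos θ • b‖ = 1 :=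
    hno _ _ (by rw [neg_sq]; exact Real.sin_sq_add_cos_sq θ)
  have hdu : ⟪Real.cos θ • a + Real.sin θ • b, (-Real.sin θ) • a + Real.cos θ • b⟫ = 0 := by
    rw [hin]; ring
  refine ⟨_, _, hd1 θ, hu1, hdu, h.shadow_of_fderiv hb hproj (hd1 θ) hu1 hdu hθ
    (h.fderiv_neg (hd0 θ) hdu hθ), fun e h1 h2 => ?_⟩
  simp [inner_add_left, real_inner_smul_left, h1, h2]

/-! ### The axis of revolution -/

/-- There is an orthonormal frame `e, u, v` such that every unit vector of the plane of `u, v` has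
planar shadow boundary. -/
lemma exists_axis (h : IsEquiGauge K p c g) (hb : Bornology.IsBounded K)
    (hproj : ∀ u : E3, ‖u‖ = 1 → ∃ cu : ℝ, ∀ d : E3, ‖d‖ = 1 → ⟪d, u⟫ = 0 →
      Metric.diam ((proj u '' K) ∩ lineThrough (proj u p) d) = cu) :
    ∃ B : OrthonormalBasis (Fin 3) ℝ E3, ∀ θ : ℝ,
      Shadow g ((-Real.sin θ) • B 1 + Real.cos θ • B 2) := by
  set b := EuclideanSpace.basisFun (Fin 3) ℝ
  have hbo : ∀ i j, i ≠ j → ⟪b i, b j⟫ = 0 := fun i j hij => b.orthonormal.2 hij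
  obtain ⟨d, u, hd, hu, hdu, hSu, hdu2⟩ := h.exists_shadow hb hproj
    (b.orthonormal.1 0) (b.orthonormal.1 1) (hbo 0 1 (by decide))
  obtain ⟨hd2, hu2⟩ := hdu2 (b 2) (hbo 0 2 (by decide)) (hbo 1 2 (by decide))
  -- The second plane is `u^⊥`, so the direction found in it is independent of `u`.
  obtain ⟨e, v, he, hv, hev, hSv, h3⟩ := h.exists_shadow hb hproj hd (b.orthonormal.1 2) hd2
  obtain ⟨heu, hvu⟩ := h3 u hdu (by rw [real_inner_comm]; exact hu2)
  have huv : ⟪u, v⟫ = 0 := by rw [real_inner_comm]; exact hvu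
  have hue : ⟪u, e⟫ = 0 := by rw [real_inner_comm]; exact heu
  have hve : ⟪v, e⟫ = 0 := by rw [real_inner_comm]; exact hev
  have hon : Orthonormal ℝ ![e, u, v] := by
    constructor
    · intro i
      fin_cases i <;> simp [he, hu, hv]
    · intro i j hij
      fin_cases i <;> fin_cases j <;> simp_all
  obtain ⟨B, hB⟩ := Orthonormal.exists_orthonormalBasis_extension_of_card_eq
    (𝕜 := ℝ) (v := ![e, u, v]) (s := univ) (by simp) (hon.comp _ Subtype.val_injective)
  have hB0 : B 0 = e := by simpa using hB 0 trivial
  have hB1 : B 1 = u := by simpa using hB 1 trivial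
  have hB2 : B 2 = v := by simpa using hB 2 trivial
  refine ⟨B, fun θ => ?_⟩
  rw [hB1, hB2]
  have he0 : e ≠ 0 := by rintro rfl; simp at he
  have hne0 := neg_ne_zero.2 he0
  have hw : ‖(-Real.sin θ) • u + Real.cos θ • v‖ = 1 := by
    have h2 : ‖(-Real.sin θ) • u + Real.cos θ • v‖ ^ 2 = 1 := by
      rw [← real_inner_self_eq_norm_sq]
      simp only [inner_add_left, inner_add_right, real_inner_smul_left, real_inner_smul_right,
        huv, hvu]
      rw [real_inner_self_eq_norm_sq, real_inner_self_eq_norm_sq, hu, hv]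
      linarith [Real.sin_sq_add_cos_sq θ]
    exact (pow_eq_one_iff_of_nonneg (norm_nonneg _) two_ne_zero).1 h2
  -- At the two boundary points on the axis both `u` and `v` are tangent, hence so is their span.
  refine h.shadow_of_fderiv hb hproj he hw ?_ ?_ ?_
  · simp [inner_add_right, real_inner_smul_right, heu, hev]
  · simp [hSu e he0 heu, hSv e he0 hev]
  · simp only [map_add, map_smul, hSu (-e) hne0 (by rw [inner_neg_left, heu, neg_zero]),
      hSv (-e) hne0 (by rw [inner_neg_left, hev, neg_zero]), smul_zero, add_zero]

/-- The gauge is constant along each circle about the axis, since its derivative in the direction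
tangent to the circle vanishes. -/
lemma circle_const (h : IsEquiGauge K p c g) (B : OrthonormalBasis (Fin 3) ℝ E3)
    (hB : ∀ θ : ℝ, Shadow g ((-Real.sin θ) • B 1 + Real.cos θ • B 2)) (s r α β : ℝ) :
    g (s • B 0 + r • (Real.cos α • B 1 + Real.sin α • B 2)) =
      g (s • B 0 + r • (Real.cos β • B 1 + Real.sin β • B 2)) := by
  have o : ∀ i j, ⟪B i, B j⟫ = if i = j then (1:ℝ) else 0 :=
    fun i j => orthonormal_iff_ite.1 B.orthonormal i j
  have hin : ∀ θ, ⟪s • B 0 + r • (Real.cos θ • B 1 + Real.sin θ • B 2),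
      s • B 0 + r • (Real.cos θ • B 1 + Real.sin θ • B 2)⟫ = s ^ 2 + r ^ 2 := by
    intro θ
    simp only [inner_add_left, inner_add_right, real_inner_smul_left, real_inner_smul_right, o]
    simp
    linear_combination r ^ 2 * Real.sin_sq_add_cos_sq θ
  by_cases hsr : s ^ 2 + r ^ 2 = 0
  · have z : ∀ θ, s • B 0 + r • (Real.cos θ • B 1 + Real.sin θ • B 2) = 0 := fun θ =>
      inner_self_eq_zero.1 ((hin θ).trans hsr)
    rw [z, z]
  have hne : ∀ θ, s • B 0 + r • (Real.cos θ • B 1 + Real.sin θ • B 2) ≠ 0 := by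
    intro θ h0
    have := hin θ
    rw [h0, inner_zero_left] at this
    exact hsr this.symm
  have hder : ∀ θ, HasDerivAt
      (fun θ => g (s • B 0 + r • (Real.cos θ • B 1 + Real.sin θ • B 2))) 0 θ := by
    intro θ
    have h0 : fderiv ℝ g (s • B 0 + r • (Real.cos θ • B 1 + Real.sin θ • B 2))
        (r • ((-Real.sin θ) • B 1 + Real.cos θ • B 2)) = 0 := by
      rw [map_smul, hB θ _ (hne θ), smul_zero]
      simp only [inner_add_left, inner_add_right, real_inner_smul_left, real_inner_smul_right, o]
      simp
      ring
    rw [← h0]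
    exact (h.differentiableAt _ (hne θ)).hasFDerivAt.comp_hasDerivAt θ
      (((((Real.hasDerivAt_cos θ).smul_const (B 1)).add
        ((Real.hasDerivAt_sin θ).smul_const (B 2))).const_smul r).const_add (s • B 0))
  exact is_const_of_deriv_eq_zero (fun θ => (hder θ).differentiableAt) (fun θ => (hder θ).deriv) α β

lemma eq_of_inner_eq (h : IsEquiGauge K p c g) (B : OrthonormalBasis (Fin 3) ℝ E3)
    (hB : ∀ θ : ℝ, Shadow g ((-Real.sin θ) • B 1 + Real.cos θ • B 2)) {x y : E3}
    (hn : ‖x‖ = ‖y‖) (hi : ⟪B 0, x⟫ = ⟪B 0, y⟫) : g x = g y := by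
  have key : ∀ z : E3, ∃ θ : ℝ, z = ⟪B 0, z⟫ • B 0 + √(‖z‖ ^ 2 - ⟪B 0, z⟫ ^ 2) •
      (Real.cos θ • B 1 + Real.sin θ • B 2) := by
    intro z
    have hz := B.sum_repr' z
    have hz2 := B.sum_sq_norm_inner_right z
    simp only [Fin.sum_univ_three, Real.norm_eq_abs, sq_abs] at hz hz2
    have hr : √(‖z‖ ^ 2 - ⟪B 0, z⟫ ^ 2) = ‖(⟨⟪B 1, z⟫, ⟪B 2, z⟫⟩ : ℂ)‖ := by
      rw [Complex.norm_def, Complex.normSq_mk]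
      congr 1
      linarith
    refine ⟨Complex.arg ⟨⟪B 1, z⟫, ⟪B 2, z⟫⟩, ?_⟩
    rw [hr, smul_add, smul_smul, smul_smul, Complex.norm_mul_cos_arg, Complex.norm_mul_sin_arg,
      ← add_assoc]
    exact hz.symm
  obtain ⟨α, hα⟩ := key x
  obtain ⟨β, hβ⟩ := key y
  rw [hα, hβ, ← hn, ← hi]
  exact h.circle_const B hB _ _ α β

end IsEquiGauge

/-! ### The gauge of an equichordal body -/

lemma exists_isEquiGauge (K : Set E3) (hKcpt : IsCompact K) (hKconv : Convex ℝ K)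
    (p : E3) (hp : p ∈ interior K)
    (c : ℝ) (hequi : ∀ u : E3, ‖u‖ = 1 → Metric.diam (K ∩ lineThrough p u) = c) :
    ∃ g, IsEquiGauge K p c g := by
  set L : Set E3 := (fun x => p + x) ⁻¹' K with hL
  have hLc : Convex ℝ L := hKconv.translate_preimage_right p
  have hL0 : L ∈ nhds (0 : E3) := by
    refine ContinuousAt.preimage_mem_nhds (by fun_prop) ?_
    simpa using mem_interior_iff_mem_nhds.1 hp
  have hLcl : IsClosed L := hKcpt.isClosed.preimage (by fun_prop)
  have hLb : Bornology.IsBounded L := by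
    have : L = (Homeomorph.addLeft p) ⁻¹' K := rfl
    rw [this]
    exact ((Homeomorph.addLeft p).isCompact_preimage.2 hKcpt).isBounded
  have hLa : Absorbent ℝ L := absorbent_nhds_zero hL0
  have hpos : ∀ x : E3, x ≠ 0 → 0 < gauge L x := fun x hx =>
    (gauge_pos hLa (NormedSpace.isVonNBounded_iff ℝ |>.2 hLb)).2 hx
  have hsm : ∀ t : ℝ, 0 ≤ t → ∀ x, gauge L (t • x) = t * gauge L x := fun t ht x => by
    rw [gauge_smul_of_nonneg ht, smul_eq_mul]
  have hmem : ∀ x, p + x ∈ K ↔ gauge L x ≤ 1 := fun x => by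
    rw [gauge_le_one_iff_mem_closure hLc hL0, hLcl.closure_eq]
    rfl
  refine ⟨gauge L, gauge_add_le hLc hLa, hsm, hpos, hmem, fun u hu => ?_⟩
  have hu0 : u ≠ 0 := by rintro rfl; simp at hu
  have g1 := hpos u hu0
  have g2 := hpos (-u) (neg_ne_zero.2 hu0)
  have hset : K ∩ lineThrough p u =
      (fun t : ℝ => p + t • u) '' Icc (-(gauge L (-u))⁻¹) (gauge L u)⁻¹ := by
    have hiff : ∀ t : ℝ, p + t • u ∈ K ↔ t ∈ Icc (-(gauge L (-u))⁻¹) (gauge L u)⁻¹ := by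
      intro t
      rw [hmem, mem_Icc]
      have i1 := inv_pos.2 g1
      have i2 := inv_pos.2 g2
      rcases le_total 0 t with ht | ht
      · rw [hsm t ht, ← le_div_iff₀ g1, one_div]
        exact ⟨fun h => ⟨by linarith, h⟩, fun h => h.2⟩
      · have : t • u = (-t) • (-u) := by simp
        rw [this, hsm _ (by linarith), ← le_div_iff₀ g2, one_div]
        exact ⟨fun h => ⟨by linarith, by linarith⟩, fun h => by linarith [h.1]⟩
    ext z
    constructor
    · rintro ⟨hz, t, rfl⟩
      exact ⟨t, (hiff t).1 hz, rfl⟩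
    · rintro ⟨t, ht, rfl⟩
      exact ⟨(hiff t).2 ht, t, rfl⟩
  rw [← hequi u hu, hset, (IsEquiGauge.isometry_line p hu).diam_image, Real.diam_Icc]
  · ring
  · have i1 := inv_pos.2 g1
    have i2 := inv_pos.2 g2
    linarith

/-- If `p` is an equichordal point of the strictly convex body `K` and, for every unit
vector `u`, `π_u(p)` is an equichordal point of `π_u(K)`, then `K` is a body of
revolution: some line is an axis of revolution of `K`. -/
theorem stmt_14 (K : Set E3)
    (hKcpt : IsCompact K) (hKconv : Convex ℝ K) (hKint : (interior K).Nonempty)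
    (hKstrict : ∀ x y : E3, x ∈ frontier K → y ∈ frontier K →
      segment ℝ x y ⊆ frontier K → x = y)
    (p : E3) (hp : p ∈ interior K)
    (c : ℝ) (hequi : ∀ u : E3, ‖u‖ = 1 → Metric.diam (K ∩ lineThrough p u) = c)
    (hproj : ∀ u : E3, ‖u‖ = 1 → ∃ cu : ℝ, ∀ d : E3, ‖d‖ = 1 → ⟪d, u⟫ = 0 →
      Metric.diam ((proj u '' K) ∩ lineThrough (proj u p) d) = cu) :
    ∃ (q v : E3), v ≠ 0 ∧ ∀ f : E3 ≃ᵃⁱ[ℝ] E3,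
      (∀ t : ℝ, f (q + t • v) = q + t • v) →
      0 < LinearMap.det (f.linearIsometryEquiv : E3 →ₗ[ℝ] E3) →
      f '' K = K := by
  obtain ⟨g, h⟩ := exists_isEquiGauge K hKcpt hKconv p hp c hequi
  obtain ⟨B, hB⟩ := h.exists_axis hKcpt.isBounded hproj
  refine ⟨p, B 0, B.orthonormal.ne_zero 0, fun f hf _ => ?_⟩
  have hfp : f p = p := by simpa using hf 0
  have hlin : ∀ x, f (p + x) = p + f.linearIsometryEquiv x := fun x => by
    have := f.map_vadd p x
    rw [hfp, vadd_eq_add, vadd_eq_add, add_comm, add_comm _ p] at this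
    exact this
  have hfe : f.linearIsometryEquiv (B 0) = B 0 := by
    have h1 := hf 1
    rw [one_smul, hlin] at h1
    exact add_left_cancel h1
  have hiff : ∀ x, f x ∈ K ↔ x ∈ K := fun x => by
    obtain ⟨y, rfl⟩ : ∃ y, x = p + y := ⟨x - p, by abel⟩
    rw [hlin, h.mem, h.mem, h.eq_of_inner_eq B hB (f.linearIsometryEquiv.norm_map y)]
    conv_lhs => rw [← hfe]
    exact f.linearIsometryEquiv.inner_map_map _ _
  ext z
  constructor
  · rintro ⟨x, hx, rfl⟩
    exact (hiff x).2 hx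
  · intro hz
    obtain ⟨x, rfl⟩ := f.surjective z
    exact ⟨x, (hiff x).1 hz, rfl⟩
end
end

section
/- Let K ⊂ ℝ³ be a strictly convex body and let p be an equichordal point of K. Suppose that for every unit vector u ∈ S², the point π_u(p) is an equichordal point of the projection π_u(K). Then every affine diameter of K passing through p is a binormal of K; that is, if [a,b] is a chord of K through p admitting parallel supporting planes of K at a and at b, then the planes through a and through b orthogonal to the segment [a,b] are supporting planes of K. -/
/-!
Let `w` be the common normal of the two parallel supporting planes at `a` and `b`. The chord of `K`
through `p` in the direction `w` stays in the slab between these planes, so its length `c` is at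
most the width `⟪w, a - b⟫ / ‖w‖` of the slab (`diam_chord_le_of_slab`). On the other hand `[a, b]`
lies on a line through `p`, so `‖a - b‖ ≤ c`. Together, `‖w‖ * ‖a - b‖ ≤ ⟪w, a - b⟫`: this is the
equality case of the Cauchy–Schwarz inequality, so `a - b` is a positive multiple of `w`, and the
given supporting planes are the planes orthogonal to `[a, b]`.
-/

open Metric Set
open scoped RealInnerProductSpace

noncomputable section

lemma diam_chord_le_of_slab {K : Set E3} {a b w q : E3} (hw : w ≠ 0)
    (ha : ∀ y ∈ K, ⟪w, y⟫ ≤ ⟪w, a⟫) (hb : ∀ y ∈ K, ⟪w, b⟫ ≤ ⟪w, y⟫) (hab : 0 ≤ ⟪w, a - b⟫) :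
    diam (K ∩ lineThrough q (‖w‖⁻¹ • w)) ≤ ⟪w, a - b⟫ / ‖w‖ := by
  have hwpos : 0 < ‖w‖ := norm_pos_iff.2 hw
  have hd : ‖‖w‖⁻¹ • w‖ = 1 := by
    rw [norm_smul, norm_inv, norm_norm, inv_mul_cancel₀ hwpos.ne']
  have hwd : ⟪w, ‖w‖⁻¹ • w⟫ = ‖w‖ := by
    rw [inner_smul_right, real_inner_self_eq_norm_sq, pow_two, inv_mul_cancel_left₀ hwpos.ne']
  refine diam_le_of_forall_dist_le (by positivity) ?_
  rintro _ ⟨hx, s, rfl⟩ _ ⟨hy, t, rfl⟩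
  rw [dist_add_left, dist_eq_norm, ← sub_smul, norm_smul, hd, mul_one, Real.norm_eq_abs,
    le_div_iff₀ hwpos, inner_sub_right, ← abs_of_pos hwpos, ← abs_mul]
  have h1 := ha _ hx
  have h2 := ha _ hy
  have h3 := hb _ hx
  have h4 := hb _ hy
  simp only [inner_add_right, inner_smul_right _ (‖w‖⁻¹ • w), hwd] at h1 h2 h3 h4
  exact abs_le.2 ⟨by linarith, by linarith⟩

/-- If `p` is an equichordal point of the strictly convex body `K` and, for every unit
vector `u`, `π_u(p)` is an equichordal point of `π_u(K)`, then every affine diameter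
`[a,b]` of `K` through `p` is a binormal of `K`: the planes through `a` and `b`
orthogonal to `[a,b]` support `K`. -/
theorem stmt_15 (K : Set E3)
    (hKcpt : IsCompact K) (hKconv : Convex ℝ K) (hKint : (interior K).Nonempty)
    (hKstrict : ∀ x y : E3, x ∈ frontier K → y ∈ frontier K →
      segment ℝ x y ⊆ frontier K → x = y)
    (p : E3) (hp : p ∈ interior K)
    (c : ℝ) (hequi : ∀ u : E3, ‖u‖ = 1 → Metric.diam (K ∩ lineThrough p u) = c)
    (hproj : ∀ u : E3, ‖u‖ = 1 → ∃ cu : ℝ, ∀ d : E3, ‖d‖ = 1 → ⟪d, u⟫ = 0 →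
      Metric.diam ((proj u '' K) ∩ lineThrough (proj u p) d) = cu) :
    ∀ a b : E3, a ≠ b → a ∈ K → b ∈ K → p ∈ segment ℝ a b →
      K ∩ lineThrough a (b - a) = segment ℝ a b →
      (∃ w : E3, w ≠ 0 ∧ (∀ y ∈ K, ⟪w, y⟫ ≤ ⟪w, a⟫) ∧ (∀ y ∈ K, ⟪w, b⟫ ≤ ⟪w, y⟫)) →
      (∀ y ∈ K, ⟪b - a, a⟫ ≤ ⟪b - a, y⟫) ∧ (∀ y ∈ K, ⟪b - a, y⟫ ≤ ⟪b - a, b⟫) := by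
  intro a b hne haK hbK hpab _ ⟨w, hw0, hwa, hwb⟩
  -- `p` is interior, so `K` contains a point strictly above `p` in the direction `w`.
  have hab : 0 < ⟪w, a - b⟫ := by
    obtain ⟨ε, hε, hball⟩ := Metric.isOpen_iff.1 isOpen_interior p hp
    have hwpos : 0 < ‖w‖ := norm_pos_iff.2 hw0
    have hmem : p + (ε / 2 / ‖w‖) • w ∈ K := by
      refine interior_subset (hball ?_)
      rw [mem_ball, dist_eq_norm, add_sub_cancel_left, norm_smul, Real.norm_eq_abs,
        abs_of_pos (by positivity), div_mul_cancel₀ _ hwpos.ne']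
      linarith
    have h1 := hwa _ hmem
    have h2 := hwb p (interior_subset hp)
    rw [inner_add_right, inner_smul_right, real_inner_self_eq_norm_sq] at h1
    have h3 : 0 < ε / 2 / ‖w‖ * ‖w‖ ^ 2 := by positivity
    rw [inner_sub_right]
    linarith
  have hc : ‖a - b‖ ≤ c := by
    have hpos : 0 < ‖a - b‖ := norm_pos_iff.2 (sub_ne_zero.2 hne)
    have hv : ‖‖a - b‖⁻¹ • (a - b)‖ = 1 := by
      rw [norm_smul, norm_inv, norm_norm, inv_mul_cancel₀ hpos.ne']
    rw [← hequi _ hv, ← dist_eq_norm]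
    obtain ⟨s, t, -, -, hst, rfl⟩ := hpab
    refine dist_le_diam_of_mem (hKcpt.isBounded.subset inter_subset_left) ⟨haK, t * ‖a - b‖, ?_⟩
      ⟨hbK, -s * ‖a - b‖, ?_⟩ <;>
    · rw [dist_eq_norm, smul_smul, mul_assoc, mul_inv_cancel₀ hpos.ne', mul_one]
      obtain rfl : s = 1 - t := by linarith
      module
  have hwpos : 0 < ‖w‖ := norm_pos_iff.2 hw0
  have hpos : 0 < ‖a - b‖ := norm_pos_iff.2 (sub_ne_zero.2 hne)
  have hwidth : c ≤ ⟪w, a - b⟫ / ‖w‖ := by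
    rw [← hequi (‖w‖⁻¹ • w) (by rw [norm_smul, norm_inv, norm_norm, inv_mul_cancel₀ hwpos.ne'])]
    exact diam_chord_le_of_slab hw0 hwa hwb hab.le
  have hCS : ⟪w, a - b⟫ = ‖w‖ * ‖a - b‖ := by
    refine le_antisymm (real_inner_le_norm _ _) ?_
    rw [mul_comm, ← le_div_iff₀ hwpos]
    exact hc.trans hwidth
  set k : ℝ := ‖w‖⁻¹ * ‖a - b‖ with hk
  have hkpos : 0 < k := by positivity
  have hr : a - b = k • w := by
    have h := inner_eq_norm_mul_iff_real.1 hCS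
    rw [hk, mul_smul, h, inv_smul_smul₀ hwpos.ne']
  have hba : b - a = -(k • w) := by rw [← hr]; abel
  constructor <;> intro y hy
  · rw [hba, inner_neg_left, inner_neg_left, real_inner_smul_left, real_inner_smul_left]
    exact neg_le_neg (mul_le_mul_of_nonneg_left (hwa y hy) hkpos.le)
  · rw [hba, inner_neg_left, inner_neg_left, real_inner_smul_left, real_inner_smul_left]
    exact neg_le_neg (mul_le_mul_of_nonneg_left (hwb y hy) hkpos.le)
end
end
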